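/- arXiv:2212.14439 — 5 statements merged into one kernel-verified Lean document; each statement's English description precedes it below -/
import Mathlib

section
/- Let f : E_x × E_y → ℝ be (L_x, L_y)-smooth and (μ_x, μ_y)-strongly convex with 0 < μ_x ≤ L_x and 0 < μ_y ≤ L_y, and let (x*, y*) be a global minimizer of f. Set α = √(μ_x/L_x), η_x = 1/√(μ_x·L_x), η_y = (1/μ_y)·√(μ_x/L_x). Let x, x̄ ∈ E_x and y, ȳ ∈ E_y, and define x̲ = α·x + (1−α)·x̄ and y̲ = α·y + (1−α)·ȳ. Suppose ȳ' ∈ E_y satisfies ‖∇_y f(x̲, ȳ') + (η_y·α)⁻¹·(ȳ' − y̲)‖ ≤ (η_y·α)⁻¹·‖ȳ' − y̲‖, and define x̄' = x̲ − η_x·α·∇_x f(x̲, ȳ'), and x' ∈ E_x, y' ∈ E_y by the equations x' = x + α·(x̲ − x') − η_x·∇_x f(x̲, ȳ') and y' = y + α·(ȳ' − y') − η_y·∇_y f(x̲, ȳ'). Define the Lyapunov function Ψ(x, y, x̄, ȳ) = (1+α)·(η_x⁻¹·‖x − x*‖² + η_y⁻¹·‖y − y*‖²) + (2/α)·(f(x̄,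 ȳ) − f(x*, y*)). Then Ψ(x', y', x̄', ȳ') ≤ (1+α)⁻¹·Ψ(x, y, x̄, ȳ). -/
open RealInnerProductSpace

/-!
Write `D = ηx⁻¹ ‖x - xs‖² + ηy⁻¹ ‖y - ys‖²` and `δ = f xb yb - f xs ys`, with `D'`, `δ'` their
values after the step, and let `g`, `h` be the partial gradients of `f` at `(xu, yb')`. Each
implicit step contracts its share of `D` up to terms linear in the gradient and a multiple of its
squared norm. The squared norm is paid for by the descent of the gradient step in the `x` block and
by the relative-error criterion in the `y` block. Weighting the strong convexity inequality towards
`(xs, ys)` by `α` and the convexity inequality towards `(xb, yb)` by `1 - α`, all inner products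
cancel and leave

`(1 + α) D' + (2 / α) δ' ≤ D + (1 - α) (2 / α) δ`.

As `1 - α ≤ (1 + α)⁻¹` and `0 ≤ δ`, the right-hand side is at most `(1 + α)⁻¹ Ψ`.
-/

section Block

variable {E : Type*} [NormedAddCommGroup E] [InnerProductSpace ℝ E]

lemma two_mul_inner_le_mul_norm_sq_add {η : ℝ} (hη : 0 < η) (g d : E) :
    2 * ⟪g, d⟫ ≤ η * ‖g‖ ^ 2 + η⁻¹ * ‖d‖ ^ 2 := by
  have hsq : 0 ≤ η⁻¹ * ‖η • g - d‖ ^ 2 := by positivity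
  rw [norm_sub_sq_real, norm_smul, mul_pow, Real.norm_eq_abs, sq_abs, real_inner_smul_left] at hsq
  field_simp at hsq ⊢
  linarith

lemma apply_le_sub_of_gradient_step {φ : E → ℝ} {L γ : ℝ} {g x x' : E}
    (hφ : φ x' ≤ φ x + ⟪g, x' - x⟫ + L / 2 * ‖x' - x‖ ^ 2) (hγ : 0 ≤ γ) (hLγ : L * γ ≤ 1)
    (hx' : x' = x - γ • g) :
    φ x' ≤ φ x - γ / 2 * ‖g‖ ^ 2 := by
  have hstep : x' - x = -(γ • g) := by rw [hx']; abel
  rw [hstep, inner_neg_right, real_inner_smul_right, real_inner_self_eq_norm_sq, norm_neg,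
    norm_smul, mul_pow, Real.norm_eq_abs, sq_abs] at hφ
  have hcurv : L * γ * (γ * ‖g‖ ^ 2) ≤ 1 * (γ * ‖g‖ ^ 2) := by gcongr
  linarith

lemma two_mul_inner_le_neg_of_norm_add_le {γ : ℝ} (hγ : 0 < γ) {g d : E}
    (h : ‖g + γ⁻¹ • d‖ ≤ γ⁻¹ * ‖d‖) :
    2 * ⟪g, d⟫ ≤ -(γ * ‖g‖ ^ 2) := by
  have hsq : ‖g + γ⁻¹ • d‖ ^ 2 ≤ (γ⁻¹ * ‖d‖) ^ 2 := by gcongr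
  rw [norm_add_sq_real, real_inner_smul_right, norm_smul, Real.norm_eq_abs,
    abs_of_pos (inv_pos.2 hγ)] at hsq
  have hscaled : γ * (‖g‖ ^ 2 + 2 * (γ⁻¹ * ⟪g, d⟫)) ≤ 0 :=
    mul_nonpos_of_nonneg_of_nonpos hγ.le (by linarith)
  field_simp at hscaled
  linarith

lemma one_add_mul_norm_sub_sq_of_implicit_step {α η : ℝ} {g u x x' : E}
    (hx' : x' = x + α • (u - x') - η • g) (s : E) :
    (1 + α) * ‖x' - s‖ ^ 2 = ‖x - s‖ ^ 2 + α * ‖u - s‖ ^ 2 - ‖x - x'‖ ^ 2 - α * ‖u - x'‖ ^ 2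
      - 2 * η * ⟪g, x' - s⟫ := by
  have hx : x - s = (x' - s) + (x - x') := by abel
  have hu : u - s = (x' - s) + (u - x') := by abel
  have hsum : (x - x') + α • (u - x') = η • g := by
    rw [sub_add_eq_add_sub, sub_eq_iff_eq_add, ← sub_eq_iff_eq_add', ← hx']
  have hinner : ⟪x' - s, x - x'⟫ + α * ⟪x' - s, u - x'⟫ = η * ⟪g, x' - s⟫ := by
    rw [← real_inner_smul_right, ← inner_add_right, hsum, real_inner_smul_right, real_inner_comm]
  rw [hx, hu, norm_add_sq_real, norm_add_sq_real]
  linear_combination -2 * hinner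

lemma implicit_step_norm_sub_sq_le {α η μ : ℝ} (hα : 0 ≤ α) (hη : 0 < η) (hμ : α ≤ μ * η)
    {g u x x' : E} (hx' : x' = x + α • (u - x') - η • g) (s : E) :
    (1 + α) * (η⁻¹ * ‖x' - s‖ ^ 2) ≤ η⁻¹ * ‖x - s‖ ^ 2 + μ * ‖u - s‖ ^ 2 - 2 * ⟪g, u - s⟫
      + (η * ‖g‖ ^ 2 - 2 * ⟪g, x - u⟫) := by
  have hinner : ⟪g, x' - s⟫ = ⟪g, u - s⟫ + ⟪g, x - u⟫ - ⟪g, x - x'⟫ := by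
    rw [← inner_add_right, ← inner_sub_right]
    congr 1
    abel
  have hmodulus : η⁻¹ * (α * ‖u - s‖ ^ 2) ≤ μ * ‖u - s‖ ^ 2 := by
    rw [← mul_assoc]
    gcongr
    rwa [inv_mul_le_iff₀' hη]
  have hdrop : 0 ≤ η⁻¹ * (α * ‖u - x'‖ ^ 2) := by positivity
  calc (1 + α) * (η⁻¹ * ‖x' - s‖ ^ 2)
      = η⁻¹ * ‖x - s‖ ^ 2 + η⁻¹ * (α * ‖u - s‖ ^ 2) - η⁻¹ * ‖x - x'‖ ^ 2
          - η⁻¹ * (α * ‖u - x'‖ ^ 2) - 2 * ⟪g, x' - s⟫ := by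
        rw [mul_left_comm, one_add_mul_norm_sub_sq_of_implicit_step hx' s]
        field_simp
    _ ≤ _ := by linarith [two_mul_inner_le_mul_norm_sq_add hη g (x - x')]

lemma one_sub_mul_inner_sub {α : ℝ} {x xb u : E} (hu : u = α • x + (1 - α) • xb) (g q : E) :
    (1 - α) * ⟪g, q - xb⟫ = ⟪g, q - u⟫ + α * ⟪g, x - q⟫ := by
  rw [← real_inner_smul_right, ← real_inner_smul_right, ← inner_add_right, hu]
  congr 1
  module

end Block

lemma mul_one_div_sqrt_mul {μ : ℝ} (hμ : 0 ≤ μ) (L : ℝ) : μ * (1 / √(μ * L)) = √(μ / L) := by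
  rw [mul_one_div, Real.sqrt_mul hμ, Real.sqrt_div hμ, ← div_div, Real.div_sqrt]

lemma mul_one_div_sqrt_mul_mul_sqrt_div {μ L : ℝ} (hμ : 0 < μ) (hL : 0 < L) :
    L * (1 / √(μ * L) * √(μ / L)) = 1 := by
  rw [Real.sqrt_mul hμ.le, Real.sqrt_div hμ.le]
  field_simp
  rw [Real.sq_sqrt hL.le]

lemma add_two_div_mul_le_inv_one_add_mul {α D D' δ δ' : ℝ} (hα : 0 < α) (hδ : 0 ≤ δ)
    (h : α * ((1 + α) * D' - D) + 2 * δ' ≤ 2 * (1 - α) * δ) :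
    (1 + α) * D' + 2 / α * δ' ≤ (1 + α)⁻¹ * ((1 + α) * D + 2 / α * δ) := by
  have hrate : 1 - α ≤ (1 + α)⁻¹ := by
    rw [← one_div, le_div_iff₀ (by positivity)]
    nlinarith only [sq_nonneg α]
  calc (1 + α) * D' + 2 / α * δ'
      = D + (α * ((1 + α) * D' - D) + 2 * δ') / α := by field_simp; ring
    _ ≤ D + 2 * (1 - α) * δ / α := by gcongr
    _ = D + (1 - α) * (2 / α * δ) := by ring
    _ ≤ D + (1 + α)⁻¹ * (2 / α * δ) := by gcongr
    _ = (1 + α)⁻¹ * ((1 + α) * D + 2 / α * δ) := by field_simp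

section TwoBlocks

variable {Ex Ey : Type*} [NormedAddCommGroup Ex] [InnerProductSpace ℝ Ex]
  [NormedAddCommGroup Ey] [InnerProductSpace ℝ Ey]

/-- The pair `(g, h)` is a subgradient of `f` at `(u, q)` with strong convexity moduli `μx`, `μy` in
the two blocks. Strong convexity of `f` is this property of its partial gradients at every point. -/
def IsStrongSubgradientAt (f : Ex → Ey → ℝ) (μx μy : ℝ) (g : Ex) (h : Ey) (u : Ex) (q : Ey) :
    Prop :=
  ∀ a b, f u q + ⟪g, a - u⟫ + ⟪h, b - q⟫ + μx / 2 * ‖a - u‖ ^ 2 + μy / 2 * ‖b - q‖ ^ 2 ≤ f a b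

/-- The Lyapunov function `Ψ(x, y, xb, yb)` measuring the distance of an iterate to the comparison
point `(xs, ys)`. -/
noncomputable def bamLyapunov (f : Ex → Ey → ℝ) (α ηx ηy : ℝ) (xs : Ex) (ys : Ey) (x : Ex) (y : Ey)
    (xb : Ex) (yb : Ey) : ℝ :=
  (1 + α) * (ηx⁻¹ * ‖x - xs‖ ^ 2 + ηy⁻¹ * ‖y - ys‖ ^ 2) + 2 / α * (f xb yb - f xs ys)

variable {f : Ex → Ey → ℝ} {μx μy : ℝ} {g : Ex} {h : Ey} {u : Ex} {q : Ey}

lemma IsStrongSubgradientAt.two_mul_sub_le (hf : IsStrongSubgradientAt f μx μy g h u q)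
    (a : Ex) (b : Ey) :
    μx * ‖u - a‖ ^ 2 - 2 * ⟪g, u - a⟫ + (μy * ‖q - b‖ ^ 2 - 2 * ⟪h, q - b⟫)
      ≤ 2 * (f a b - f u q) := by
  have hab := hf a b
  rw [← neg_sub u a, ← neg_sub q b, inner_neg_right, inner_neg_right, norm_neg, norm_neg] at hab
  linarith

lemma IsStrongSubgradientAt.sub_le_inner_add_inner (hf : IsStrongSubgradientAt f μx μy g h u q)
    (hμx : 0 ≤ μx) (hμy : 0 ≤ μy) (a : Ex) (b : Ey) :
    f u q - f a b ≤ ⟪g, u - a⟫ + ⟪h, q - b⟫ := by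
  have hx : 0 ≤ μx * ‖u - a‖ ^ 2 := by positivity
  have hy : 0 ≤ μy * ‖q - b‖ ^ 2 := by positivity
  linarith [hf.two_mul_sub_le a b]

theorem bam_one_step_lyapunov_contraction_general {Lx α ηx ηy : ℝ}
    (hα : 0 < α) (hα1 : α ≤ 1) (hηx : 0 < ηx) (hηy : 0 < ηy)
    (hμx : α ≤ μx * ηx) (hμy : α ≤ μy * ηy) (hLx : Lx * (ηx * α) ≤ 1)
    {xu : Ex} {yb' : Ey} (hsc : IsStrongSubgradientAt f μx μy g h xu yb')
    (hsmooth : ∀ a, f a yb' ≤ f xu yb' + ⟪g, a - xu⟫ + Lx / 2 * ‖a - xu‖ ^ 2)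
    {xs x xb x' xb' : Ex} {ys y yb yu y' : Ey} (hs : f xs ys ≤ f xb yb)
    (hxu : xu = α • x + (1 - α) • xb) (hyu : yu = α • y + (1 - α) • yb)
    (hyb' : ‖h + (ηy * α)⁻¹ • (yb' - yu)‖ ≤ (ηy * α)⁻¹ * ‖yb' - yu‖)
    (hxb' : xb' = xu - (ηx * α) • g)
    (hx' : x' = x + α • (xu - x') - ηx • g) (hy' : y' = y + α • (yb' - y') - ηy • h) :
    bamLyapunov f α ηx ηy xs ys x' y' xb' yb' ≤
      (1 + α)⁻¹ * bamLyapunov f α ηx ηy xs ys x y xb yb := by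
  have hμx0 : 0 ≤ μx := (pos_of_mul_pos_left (hα.trans_le hμx) hηx.le).le
  have hμy0 : 0 ≤ μy := (pos_of_mul_pos_left (hα.trans_le hμy) hηy.le).le
  have hgrad : f xb' yb' ≤ f xu yb' - ηx * α / 2 * ‖g‖ ^ 2 :=
    apply_le_sub_of_gradient_step (φ := (f · yb')) (hsmooth xb') (by positivity) hLx hxb'
  have hprox : 2 * ⟪h, yb' - yu⟫ ≤ -(ηy * α * ‖h‖ ^ 2) :=
    two_mul_inner_le_neg_of_norm_add_le (by positivity) hyb'
  have hxc : (1 - α) * ⟪g, xu - xb⟫ = α * ⟪g, x - xu⟫ := by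
    simpa only [sub_self, inner_zero_right, zero_add] using one_sub_mul_inner_sub hxu g xu
  have hyc := one_sub_mul_inner_sub hyu h yb'
  have hconv : (1 - α) * (f xu yb' - f xb yb) ≤ (1 - α) * (⟪g, xu - xb⟫ + ⟪h, yb' - yb⟫) :=
    mul_le_mul_of_nonneg_left (hsc.sub_le_inner_add_inner hμx0 hμy0 xb yb) (sub_nonneg.2 hα1)
  have hdist : (1 + α) * (ηx⁻¹ * ‖x' - xs‖ ^ 2 + ηy⁻¹ * ‖y' - ys‖ ^ 2)
      ≤ ηx⁻¹ * ‖x - xs‖ ^ 2 + ηy⁻¹ * ‖y - ys‖ ^ 2 + 2 * (f xs ys - f xu yb')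
        + (ηx * ‖g‖ ^ 2 - 2 * ⟪g, x - xu⟫) + (ηy * ‖h‖ ^ 2 - 2 * ⟪h, y - yb'⟫) := by
    linarith [implicit_step_norm_sub_sq_le hα.le hηx hμx hx' xs,
      implicit_step_norm_sub_sq_le hα.le hηy hμy hy' ys, hsc.two_mul_sub_le xs ys]
  refine add_two_div_mul_le_inv_one_add_mul hα (sub_nonneg.2 hs) ?_
  linarith [mul_le_mul_of_nonneg_left hdist hα.le]

end TwoBlocks

theorem bam_one_step_lyapunov_contraction
    {Ex Ey : Type*} [NormedAddCommGroup Ex] [InnerProductSpace ℝ Ex]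
    [NormedAddCommGroup Ey] [InnerProductSpace ℝ Ey]
    (f : Ex → Ey → ℝ) (gx : Ex → Ey → Ex) (gy : Ex → Ey → Ey)
    (Lx Ly μx μy : ℝ) (hμx : 0 < μx) (hμy : 0 < μy) (hμLx : μx ≤ Lx) (hμLy : μy ≤ Ly)
    (hsmooth : ∀ x₁ x₂ : Ex, ∀ y₁ y₂ : Ey,
      f x₂ y₂ ≤ f x₁ y₁ + ⟪gx x₁ y₁, x₂ - x₁⟫ + ⟪gy x₁ y₁, y₂ - y₁⟫
        + Lx / 2 * ‖x₂ - x₁‖ ^ 2 + Ly / 2 * ‖y₂ - y₁‖ ^ 2)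
    (hsc : ∀ x₁ x₂ : Ex, ∀ y₁ y₂ : Ey,
      f x₂ y₂ ≥ f x₁ y₁ + ⟪gx x₁ y₁, x₂ - x₁⟫ + ⟪gy x₁ y₁, y₂ - y₁⟫
        + μx / 2 * ‖x₂ - x₁‖ ^ 2 + μy / 2 * ‖y₂ - y₁‖ ^ 2)
    (xs : Ex) (ys : Ey) (hmin : ∀ x y, f xs ys ≤ f x y)
    (α ηx ηy : ℝ)
    (hα : α = Real.sqrt (μx / Lx))
    (hηx : ηx = 1 / Real.sqrt (μx * Lx))
    (hηy : ηy = (1 / μy) * Real.sqrt (μx / Lx))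
    (x xb : Ex) (y yb : Ey) (xu : Ex) (yu : Ey)
    (hxu : xu = α • x + (1 - α) • xb)
    (hyu : yu = α • y + (1 - α) • yb)
    (yb' : Ey)
    (hyb' : ‖gy xu yb' + (ηy * α)⁻¹ • (yb' - yu)‖ ≤ (ηy * α)⁻¹ * ‖yb' - yu‖)
    (xb' : Ex) (hxb' : xb' = xu - (ηx * α) • gx xu yb')
    (x' : Ex) (y' : Ey)
    (hx' : x' = x + α • (xu - x') - ηx • gx xu yb')
    (hy' : y' = y + α • (yb' - y') - ηy • gy xu yb')
    (Ψ : Ex → Ey → Ex → Ey → ℝ)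
    (hΨ : ∀ a c b d, Ψ a c b d =
      (1 + α) * (ηx⁻¹ * ‖a - xs‖ ^ 2 + ηy⁻¹ * ‖c - ys‖ ^ 2)
        + (2 / α) * (f b d - f xs ys)) :
    Ψ x' y' xb' yb' ≤ (1 + α)⁻¹ * Ψ x y xb yb := by
  have hLx : 0 < Lx := hμx.trans_le hμLx
  have hα0 : 0 < α := by rw [hα]; positivity
  have hα1 : α ≤ 1 := by rw [hα, Real.sqrt_le_one]; exact (div_le_one hLx).2 hμLx
  have hηx0 : 0 < ηx := by rw [hηx]; positivity
  have hηy0 : 0 < ηy := by rw [hηy]; positivity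
  have hαx : α = μx * ηx := by rw [hα, hηx, mul_one_div_sqrt_mul hμx.le]
  have hαy : α = μy * ηy := by rw [hα, hηy, one_div, mul_inv_cancel_left₀ hμy.ne']
  have hstep : Lx * (ηx * α) = 1 := by
    rw [hα, hηx, mul_one_div_sqrt_mul_mul_sqrt_div hμx hLx]
  have hsmooth_x (a : Ex) :
      f a yb' ≤ f xu yb' + ⟪gx xu yb', a - xu⟫ + Lx / 2 * ‖a - xu‖ ^ 2 := by
    simpa using hsmooth xu a yb' yb'
  rw [hΨ, hΨ]
  exact bam_one_step_lyapunov_contraction_general hα0 hα1 hηx0 hηy0 hαx.le hαy.le hstep.le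
    (fun a b => hsc xu a yb' b) hsmooth_x (hmin xb yb) hxu hyu hyb' hxb' hx' hy'
end

section
/- Let f : E_x × E_y → ℝ be (L_x, L_y)-smooth and (μ_x, μ_y)-strongly convex with 0 < μ_x ≤ L_x and 0 < μ_y ≤ L_y, and let (x*, y*) be a global minimizer of f. Set α = √(μ_x/L_x), η_x = 1/√(μ_x·L_x), η_y = (1/μ_y)·√(μ_x/L_x). Let (x^k)_{k=0}^{K}, (x̄^k)_{k=0}^{K} be sequences in E_x and (y^k)_{k=0}^{K}, (ȳ^k)_{k=0}^{K} sequences in E_y with x^0 = x̄^0 and y^0 = ȳ^0, such that for every k < K, setting x̲^k = α·x^k + (1−α)·x̄^k and y̲^k = α·y^k + (1−α)·ȳ^k, the iterates satisfy ‖∇_y f(x̲^k, ȳ^{k+1}) + (η_y·α)⁻¹·(ȳ^{k+1} − y̲^k)‖ ≤ (η_y·α)⁻¹·‖ȳ^{k+1} − y̲^k‖, x̄^{k+1} = x̲^k − η_x·α·∇_x f(x̲^k, ȳ^{k+1}), x^{k+1} = x^k + α·(x̲^k − x^{k+1}) − η_x·∇_x f(x̲^k, ȳ^{k+1}), and y^{k+1}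 = y^k + α·(ȳ^{k+1} − y^{k+1}) − η_y·∇_y f(x̲^k, ȳ^{k+1}). Define Ψ^k = (1+α)·(η_x⁻¹·‖x^k − x*‖² + η_y⁻¹·‖y^k − y*‖²) + (2/α)·(f(x̄^k, ȳ^k) − f(x*, y*)). Then Ψ^K ≤ (1+α)^{−K}·Ψ^0, and consequently f(x̄^K, ȳ^K) − f(x*, y*) ≤ (α/2)·(1+α)^{−K}·Ψ^0. -/
open RealInnerProductSpace

/-!
Both blocks are updated by `p' = p + α (q - p') - η g`; thus `p'` is a weighted average of the
gradient step `p - η g` and the point `q` at which the gradient `g` is taken, so the distance of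
`p'` to a component `z` of the minimizer is controlled by convexity of the squared norm. Writing
`q - p` through the extrapolated point `w = α p + (1 - α) p̄`, every block contributes `⟪g, z - q⟫`
and `⟪g, p̄ - q⟫`, which strong convexity of `f` bounds by its values at the minimizer and at
`(x̄, ȳ)`, together with the residue `⟪g, q - w⟫ + (η α / 2) ‖g‖²`. In the first block `q = w`, and
the residue is paid for by the descent of the gradient step to `x̄'`; in the second block the
inexactness criterion makes it nonpositive.
-/

section InnerProductSpace

variable {E : Type*} [NormedAddCommGroup E] [InnerProductSpace ℝ E]

lemma one_add_mul_norm_sq_le_of_eq_add_smul_sub {a b w : E} {α : ℝ} (hα : 0 ≤ α)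
    (hw : w = a + α • (b - w)) :
    (1 + α) * ‖w‖ ^ 2 ≤ ‖a‖ ^ 2 + α * ‖b‖ ^ 2 := by
  have ha : ‖a‖ ^ 2 = ‖w‖ ^ 2 - 2 * (α * ⟪w, b - w⟫) + α ^ 2 * ‖b - w‖ ^ 2 := by
    rw [eq_sub_of_add_eq hw.symm, norm_sub_sq_real, real_inner_smul_right, norm_smul, mul_pow,
      Real.norm_eq_abs, sq_abs]
  have hb : ‖b‖ ^ 2 = ‖w‖ ^ 2 + 2 * ⟪w, b - w⟫ + ‖b - w‖ ^ 2 := by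
    rw [← norm_add_sq_real, add_sub_cancel]
  have hdefect : 0 ≤ α * (1 + α) * ‖b - w‖ ^ 2 := by positivity
  rw [ha, hb]
  linarith

lemma norm_sq_le_neg_two_mul_inner_of_norm_add_le {a b : E} (h : ‖a + b‖ ≤ ‖b‖) :
    ‖a‖ ^ 2 ≤ -2 * ⟪a, b⟫ := by
  have hsq := pow_le_pow_left₀ (norm_nonneg _) h 2
  rw [norm_add_sq_real] at hsq
  linarith

lemma inner_add_mul_norm_sq_nonpos_of_norm_add_inv_smul_le {g d : E} {γ : ℝ} (hγ : 0 < γ)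
    (h : ‖g + γ⁻¹ • d‖ ≤ γ⁻¹ * ‖d‖) :
    ⟪g, d⟫ + γ / 2 * ‖g‖ ^ 2 ≤ 0 := by
  have hnorm : ‖γ⁻¹ • d‖ = γ⁻¹ * ‖d‖ := norm_smul_of_nonneg (inv_nonneg.2 hγ.le) d
  have hg := norm_sq_le_neg_two_mul_inner_of_norm_add_le (h.trans_eq hnorm.symm)
  rw [real_inner_smul_right] at hg
  calc ⟪g, d⟫ + γ / 2 * ‖g‖ ^ 2 ≤ ⟪g, d⟫ + γ / 2 * (-2 * (γ⁻¹ * ⟪g, d⟫)) := by gcongr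
    _ = 0 := by field_simp; ring

lemma apply_sub_smul_le_of_quadratic_upper_bound {φ : E → ℝ} {u g : E} {L γ : ℝ}
    (hφ : ∀ w, φ w ≤ φ u + ⟪g, w - u⟫ + L / 2 * ‖w - u‖ ^ 2) (hγ : 0 ≤ γ) (hγL : γ * L ≤ 1) :
    φ (u - γ • g) ≤ φ u - γ / 2 * ‖g‖ ^ 2 := by
  have hstep : u - γ • g - u = -(γ • g) := by abel
  have hquad : φ (u - γ • g) ≤ φ u - γ * ‖g‖ ^ 2 + γ * L * (γ / 2 * ‖g‖ ^ 2) := by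
    have h := hφ (u - γ • g)
    rw [hstep, inner_neg_right, real_inner_smul_right, real_inner_self_eq_norm_sq, norm_neg,
      norm_smul_of_nonneg hγ] at h
    linarith
  have hdamp : γ * L * (γ / 2 * ‖g‖ ^ 2) ≤ γ / 2 * ‖g‖ ^ 2 :=
    mul_le_of_le_one_left (by positivity) hγL
  linarith

lemma inner_sub_eq_of_eq_smul_add_smul {p pb q w : E} {α : ℝ} (hα : α ≠ 0)
    (hw : w = α • p + (1 - α) • pb) (g : E) :
    ⟪g, q - p⟫ = α⁻¹ * ((1 - α) * ⟪g, pb - q⟫ + ⟪g, q - w⟫) := by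
  have hsub : α • (q - p) = (1 - α) • (pb - q) + (q - w) := by rw [hw]; module
  rw [← real_inner_smul_right, ← inner_add_right, ← hsub, real_inner_smul_right,
    inv_mul_cancel_left₀ hα]

lemma one_add_mul_norm_sub_sq_le_of_block_step {p pb q w p' g : E} {α η μ : ℝ}
    (hα : 0 < α) (hη : 0 < η) (hαη : α ≤ η * μ)
    (hw : w = α • p + (1 - α) • pb) (hp' : p' = p + α • (q - p') - η • g) (z : E) :
    (1 + α) * (η⁻¹ * ‖p' - z‖ ^ 2) ≤ η⁻¹ * ‖p - z‖ ^ 2 + (2 * ⟪g, z - q⟫ + μ * ‖z - q‖ ^ 2)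
      + 2 / α * ((1 - α) * ⟪g, pb - q⟫ + (⟪g, q - w⟫ + η * α / 2 * ‖g‖ ^ 2)) := by
  have havg : p' - z = (p - z - η • g) + α • (q - z - (p' - z)) := by
    rw [sub_sub_sub_cancel_right]
    nth_rw 1 [hp']
    abel
  have hgrad : ‖p - z - η • g‖ ^ 2
      = ‖p - z‖ ^ 2 + 2 * η * (⟪g, z - q⟫ + ⟪g, q - p⟫) + η ^ 2 * ‖g‖ ^ 2 := by
    rw [norm_sub_sq_real, real_inner_smul_right, norm_smul_of_nonneg hη.le, ← inner_add_right,
      sub_add_sub_cancel, ← neg_sub p z, inner_neg_right, real_inner_comm]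
    ring
  have hμ : η⁻¹ * α ≤ μ := (inv_mul_le_iff₀ hη).2 hαη
  calc (1 + α) * (η⁻¹ * ‖p' - z‖ ^ 2)
      = η⁻¹ * ((1 + α) * ‖p' - z‖ ^ 2) := by ring
    _ ≤ η⁻¹ * (‖p - z - η • g‖ ^ 2 + α * ‖q - z‖ ^ 2) := by
        gcongr
        exact one_add_mul_norm_sq_le_of_eq_add_smul_sub hα.le havg
    _ = η⁻¹ * ‖p - z‖ ^ 2 + 2 * (⟪g, z - q⟫ + ⟪g, q - p⟫) + η * ‖g‖ ^ 2
          + η⁻¹ * α * ‖z - q‖ ^ 2 := by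
        rw [hgrad, norm_sub_rev q z]
        field_simp
    _ ≤ η⁻¹ * ‖p - z‖ ^ 2 + 2 * (⟪g, z - q⟫ + ⟪g, q - p⟫) + η * ‖g‖ ^ 2 + μ * ‖z - q‖ ^ 2 := by
        gcongr
    _ = _ := by
        rw [inner_sub_eq_of_eq_smul_add_smul hα.ne' hw]
        field_simp
        ring

end InnerProductSpace

section BlockFunctions

variable {Ex Ey : Type*} [NormedAddCommGroup Ex] [InnerProductSpace ℝ Ex]
  [NormedAddCommGroup Ey] [InnerProductSpace ℝ Ey]

/-- `f` is `L`-smooth in its first argument, uniformly in the second, with `gx` as partial gradient.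
Differentiability is not part of the definition: only the quadratic upper bound is. -/
def SmoothInFst (f : Ex → Ey → ℝ) (gx : Ex → Ey → Ex) (L : ℝ) : Prop :=
  ∀ x₁ x₂ y, f x₂ y ≤ f x₁ y + ⟪gx x₁ y, x₂ - x₁⟫ + L / 2 * ‖x₂ - x₁‖ ^ 2

/-- `f` is `(μx, μy)`-strongly convex with `(gx, gy)` as gradient. Differentiability is not part of
the definition: `(gx, gy)` may be any selection of subgradients satisfying the quadratic lower
bound. -/
def BlockStronglyConvex (f : Ex → Ey → ℝ) (gx : Ex → Ey → Ex) (gy : Ex → Ey → Ey)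
    (μx μy : ℝ) : Prop :=
  ∀ x₁ x₂ y₁ y₂, f x₁ y₁ + ⟪gx x₁ y₁, x₂ - x₁⟫ + ⟪gy x₁ y₁, y₂ - y₁⟫
    + μx / 2 * ‖x₂ - x₁‖ ^ 2 + μy / 2 * ‖y₂ - y₁‖ ^ 2 ≤ f x₂ y₂

variable {f : Ex → Ey → ℝ} {gx : Ex → Ey → Ex} {gy : Ex → Ey → Ey} {L μx μy α ηx ηy : ℝ}

lemma BlockStronglyConvex.inner_add_inner_le (hf : BlockStronglyConvex f gx gy μx μy)
    (hμx : 0 ≤ μx) (hμy : 0 ≤ μy) (x₁ x₂ : Ex) (y₁ y₂ : Ey) :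
    ⟪gx x₁ y₁, x₂ - x₁⟫ + ⟪gy x₁ y₁, y₂ - y₁⟫ ≤ f x₂ y₂ - f x₁ y₁ := by
  have hx : 0 ≤ μx / 2 * ‖x₂ - x₁‖ ^ 2 := by positivity
  have hy : 0 ≤ μy / 2 * ‖y₂ - y₁‖ ^ 2 := by positivity
  linarith [hf x₁ x₂ y₁ y₂]

lemma bam_step_estimate (hα : 0 < α) (hα1 : α ≤ 1) (hηx : 0 < ηx) (hηy : 0 < ηy)
    (hαx : α ≤ ηx * μx) (hαy : α ≤ ηy * μy) (hαL : ηx * α * L ≤ 1)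
    (hsmooth : SmoothInFst f gx L) (hsc : BlockStronglyConvex f gx gy μx μy)
    {x xb xu x' xb' : Ex} {y yb yu y' yb' : Ey}
    (hxu : xu = α • x + (1 - α) • xb) (hyu : yu = α • y + (1 - α) • yb)
    (hinner : ‖gy xu yb' + (ηy * α)⁻¹ • (yb' - yu)‖ ≤ (ηy * α)⁻¹ * ‖yb' - yu‖)
    (hxb' : xb' = xu - (ηx * α) • gx xu yb')
    (hx' : x' = x + α • (xu - x') - ηx • gx xu yb')
    (hy' : y' = y + α • (yb' - y') - ηy • gy xu yb') (xs : Ex) (ys : Ey) :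
    (1 + α) * (ηx⁻¹ * ‖x' - xs‖ ^ 2 + ηy⁻¹ * ‖y' - ys‖ ^ 2) + 2 / α * (f xb' yb' - f xs ys)
      ≤ ηx⁻¹ * ‖x - xs‖ ^ 2 + ηy⁻¹ * ‖y - ys‖ ^ 2
        + (1 - α) * (2 / α * (f xb yb - f xs ys)) := by
  have hμx : 0 ≤ μx := (pos_of_mul_pos_right (hα.trans_le hαx) hηx.le).le
  have hμy : 0 ≤ μy := (pos_of_mul_pos_right (hα.trans_le hαy) hηy.le).le
  have hblock_x := one_add_mul_norm_sub_sq_le_of_block_step hα hηx hαx hxu hx' xs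
  have hblock_y := one_add_mul_norm_sub_sq_le_of_block_step hα hηy hαy hyu hy' ys
  have hdescent : f xb' yb' ≤ f xu yb' - ηx * α / 2 * ‖gx xu yb'‖ ^ 2 := by
    rw [hxb']
    exact apply_sub_smul_le_of_quadratic_upper_bound (φ := fun x ↦ f x yb')
      (fun w ↦ hsmooth xu w yb') (by positivity) hαL
  have hresidue := inner_add_mul_norm_sq_nonpos_of_norm_add_inv_smul_le (by positivity) hinner
  have hconv := mul_le_mul_of_nonneg_left (hsc.inner_add_inner_le hμx hμy xu xb yb' yb)
    (sub_nonneg.2 hα1)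
  rw [sub_self, inner_zero_right, zero_add] at hblock_x
  have hvalues : (1 - α) * ⟪gx xu yb', xb - xu⟫ + ηx * α / 2 * ‖gx xu yb'‖ ^ 2
      + ((1 - α) * ⟪gy xu yb', yb - yb'⟫
        + (⟪gy xu yb', yb' - yu⟫ + ηy * α / 2 * ‖gy xu yb'‖ ^ 2))
      ≤ (1 - α) * (f xb yb - f xu yb') + (f xu yb' - f xb' yb') := by
    linarith
  have hscaled := mul_le_mul_of_nonneg_left hvalues (show 0 ≤ 2 / α by positivity)
  have hcancel : 2 / α * ((1 - α) * (f xb yb - f xu yb') + (f xu yb' - f xb' yb'))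
      = (1 - α) * (2 / α * (f xb yb - f xs ys)) - 2 / α * (f xb' yb' - f xs ys)
        + 2 * (f xu yb' - f xs ys) := by
    field_simp
    ring
  linarith [hsc xu xs yb' ys]

theorem bam_linear_convergence_general (hα : 0 < α) (hα1 : α ≤ 1) (hηx : 0 < ηx) (hηy : 0 < ηy)
    (hαx : α ≤ ηx * μx) (hαy : α ≤ ηy * μy) (hαL : ηx * α * L ≤ 1)
    (hsmooth : SmoothInFst f gx L) (hsc : BlockStronglyConvex f gx gy μx μy)
    {K : ℕ} {x xb xu : ℕ → Ex} {y yb yu : ℕ → Ey} {xs : Ex} {ys : Ey}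
    (hle : ∀ k < K, f xs ys ≤ f (xb k) (yb k))
    (hxu : ∀ k < K, xu k = α • x k + (1 - α) • xb k)
    (hyu : ∀ k < K, yu k = α • y k + (1 - α) • yb k)
    (hinner : ∀ k < K,
      ‖gy (xu k) (yb (k + 1)) + (ηy * α)⁻¹ • (yb (k + 1) - yu k)‖
        ≤ (ηy * α)⁻¹ * ‖yb (k + 1) - yu k‖)
    (hxb : ∀ k < K, xb (k + 1) = xu k - (ηx * α) • gx (xu k) (yb (k + 1)))
    (hx : ∀ k < K, x (k + 1) = x k + α • (xu k - x (k + 1)) - ηx • gx (xu k) (yb (k + 1)))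
    (hy : ∀ k < K, y (k + 1) = y k + α • (yb (k + 1) - y (k + 1)) - ηy • gy (xu k) (yb (k + 1)))
    {Ψ : ℕ → ℝ}
    (hΨ : ∀ k, Ψ k = (1 + α) * (ηx⁻¹ * ‖x k - xs‖ ^ 2 + ηy⁻¹ * ‖y k - ys‖ ^ 2)
      + 2 / α * (f (xb k) (yb k) - f xs ys)) :
    Ψ K ≤ ((1 + α) ^ K)⁻¹ * Ψ 0 ∧
      f (xb K) (yb K) - f xs ys ≤ α / 2 * ((1 + α) ^ K)⁻¹ * Ψ 0 := by
  have hcontract : ∀ k < K, Ψ (k + 1) ≤ (1 + α)⁻¹ * Ψ k := by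
    intro k hk
    have hstep := bam_step_estimate hα hα1 hηx hηy hαx hαy hαL hsmooth hsc (hxu k hk) (hyu k hk)
      (hinner k hk) (hxb k hk) (hx k hk) (hy k hk) xs ys
    have hgap : 0 ≤ 2 / α * (f (xb k) (yb k) - f xs ys) :=
      mul_nonneg (by positivity) (sub_nonneg.2 (hle k hk))
    rw [le_inv_mul_iff₀ (by positivity), hΨ, hΨ k]
    -- The rate comes from `(1 + α) * (1 - α) ≤ 1`.
    nlinarith [mul_le_mul_of_nonneg_left hstep (show 0 ≤ 1 + α by positivity),
      mul_nonneg (sq_nonneg α) hgap]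
  have hΨK : Ψ K ≤ ((1 + α) ^ K)⁻¹ * Ψ 0 := by
    rw [← inv_pow]
    exact le_geom (by positivity) K hcontract
  have hgapK : 2 / α * (f (xb K) (yb K) - f xs ys) ≤ Ψ K := by
    rw [hΨ]
    exact le_add_of_nonneg_left (by positivity)
  refine ⟨hΨK, ?_⟩
  calc f (xb K) (yb K) - f xs ys = α / 2 * (2 / α * (f (xb K) (yb K) - f xs ys)) := by field_simp
    _ ≤ α / 2 * (((1 + α) ^ K)⁻¹ * Ψ 0) :=
        mul_le_mul_of_nonneg_left (hgapK.trans hΨK) (by positivity)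
    _ = _ := by ring

end BlockFunctions

lemma one_div_sqrt_mul_mul_left {a : ℝ} (ha : 0 ≤ a) (b : ℝ) :
    1 / √(a * b) * a = √(a / b) := by
  rw [Real.sqrt_mul ha, Real.sqrt_div ha, one_div_mul_eq_div, ← div_div, Real.div_sqrt]

lemma one_div_sqrt_mul_mul_sqrt_div_mul {a b : ℝ} (ha : 0 < a) (hb : 0 < b) :
    1 / √(a * b) * √(a / b) * b = 1 := by
  rw [Real.sqrt_mul ha.le, Real.sqrt_div ha.le]
  field_simp
  rw [Real.sq_sqrt hb.le]

theorem bam_linear_convergence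
    {Ex Ey : Type*} [NormedAddCommGroup Ex] [InnerProductSpace ℝ Ex]
    [NormedAddCommGroup Ey] [InnerProductSpace ℝ Ey]
    (f : Ex → Ey → ℝ) (gx : Ex → Ey → Ex) (gy : Ex → Ey → Ey)
    (Lx Ly μx μy : ℝ) (hμx : 0 < μx) (hμy : 0 < μy) (hμLx : μx ≤ Lx) (hμLy : μy ≤ Ly)
    (hsmooth : ∀ x₁ x₂ : Ex, ∀ y₁ y₂ : Ey,
      f x₂ y₂ ≤ f x₁ y₁ + ⟪gx x₁ y₁, x₂ - x₁⟫ + ⟪gy x₁ y₁, y₂ - y₁⟫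
        + Lx / 2 * ‖x₂ - x₁‖ ^ 2 + Ly / 2 * ‖y₂ - y₁‖ ^ 2)
    (hsc : ∀ x₁ x₂ : Ex, ∀ y₁ y₂ : Ey,
      f x₂ y₂ ≥ f x₁ y₁ + ⟪gx x₁ y₁, x₂ - x₁⟫ + ⟪gy x₁ y₁, y₂ - y₁⟫
        + μx / 2 * ‖x₂ - x₁‖ ^ 2 + μy / 2 * ‖y₂ - y₁‖ ^ 2)
    (xs : Ex) (ys : Ey) (hmin : ∀ x y, f xs ys ≤ f x y)
    (α ηx ηy : ℝ)
    (hα : α = Real.sqrt (μx / Lx))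
    (hηx : ηx = 1 / Real.sqrt (μx * Lx))
    (hηy : ηy = (1 / μy) * Real.sqrt (μx / Lx))
    (K : ℕ)
    (x xb : ℕ → Ex) (y yb : ℕ → Ey)
    (xu : ℕ → Ex) (yu : ℕ → Ey)
    (hx0 : x 0 = xb 0) (hy0 : y 0 = yb 0)
    (hxu : ∀ k < K, xu k = α • x k + (1 - α) • xb k)
    (hyu : ∀ k < K, yu k = α • y k + (1 - α) • yb k)
    (hinner : ∀ k < K,
      ‖gy (xu k) (yb (k + 1)) + (ηy * α)⁻¹ • (yb (k + 1) - yu k)‖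
        ≤ (ηy * α)⁻¹ * ‖yb (k + 1) - yu k‖)
    (hxb : ∀ k < K, xb (k + 1) = xu k - (ηx * α) • gx (xu k) (yb (k + 1)))
    (hx : ∀ k < K, x (k + 1) = x k + α • (xu k - x (k + 1)) - ηx • gx (xu k) (yb (k + 1)))
    (hy : ∀ k < K, y (k + 1) = y k + α • (yb (k + 1) - y (k + 1)) - ηy • gy (xu k) (yb (k + 1)))
    (Ψ : ℕ → ℝ)
    (hΨ : ∀ k, Ψ k =
      (1 + α) * (ηx⁻¹ * ‖x k - xs‖ ^ 2 + ηy⁻¹ * ‖y k - ys‖ ^ 2)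
        + (2 / α) * (f (xb k) (yb k) - f xs ys)) :
    Ψ K ≤ ((1 + α) ^ K)⁻¹ * Ψ 0 ∧
      f (xb K) (yb K) - f xs ys ≤ (α / 2) * ((1 + α) ^ K)⁻¹ * Ψ 0 := by
  have hLx : 0 < Lx := hμx.trans_le hμLx
  subst hα hηx hηy
  exact bam_linear_convergence_general (by positivity)
    (Real.sqrt_le_one.2 (div_le_one_of_le₀ hμLx hLx.le)) (by positivity) (by positivity)
    (one_div_sqrt_mul_mul_left hμx.le Lx).ge
    (by rw [mul_right_comm, one_div_mul_cancel hμy.ne', one_mul])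
    (one_div_sqrt_mul_mul_sqrt_div_mul hμx hLx).le
    (fun x₁ x₂ y ↦ by simpa using hsmooth x₁ x₂ y y) hsc (fun k _ ↦ hmin (xb k) (yb k))
    hxu hyu hinner hxb hx hy hΨ
end

section
/- Let E be a real inner product space, let α, η > 0, and let u, u', v, u*, g ∈ E satisfy the implicit update equation u' = u + α·(v − u') − η·g. Then (1+α)·‖u' − u*‖² ≤ ‖u − u*‖² − ‖u' − u‖² + α·‖v − u*‖² − 2η·⟨g, u' − u*⟩. -/
open RealInnerProductSpace

/-!
The update equation says `η • g = (u - u') + α • (v - u')`. Pairing it with `u' - w` and expanding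
both inner products by polarization gives an exact identity for `(1 + α) * ‖u' - w‖ ^ 2`; the
inequality discards its term `-α * ‖v - u'‖ ^ 2`.
-/

section ImplicitUpdate

variable {E : Type*} [SeminormedAddCommGroup E] [InnerProductSpace ℝ E]

theorem two_mul_inner_sub_sub_eq_norm_sq_sub (x y z : E) :
    2 * ⟪x - y, y - z⟫ = ‖x - z‖ ^ 2 - ‖x - y‖ ^ 2 - ‖y - z‖ ^ 2 := by
  have expansion := norm_add_sq_real (x - y) (y - z)
  rw [sub_add_sub_cancel] at expansion
  linarith

theorem implicit_update_distance_identity {α η : ℝ} {u u' v g : E}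
    (h : u' = u + α • (v - u') - η • g) (w : E) :
    (1 + α) * ‖u' - w‖ ^ 2
      = ‖u - w‖ ^ 2 - ‖u' - u‖ ^ 2 + α * (‖v - w‖ ^ 2 - ‖v - u'‖ ^ 2)
        - 2 * η * ⟪g, u' - w⟫ := by
  have step_eq : η • g = (u - u') + α • (v - u') := by linear_combination (norm := module) h
  have pairing : η * ⟪g, u' - w⟫ = ⟪u - u', u' - w⟫ + α * ⟪v - u', u' - w⟫ := by
    rw [← real_inner_smul_left, step_eq, inner_add_left, real_inner_smul_left]
  have polar_u := two_mul_inner_sub_sub_eq_norm_sq_sub u u' w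
  have polar_v := two_mul_inner_sub_sub_eq_norm_sq_sub v u' w
  rw [norm_sub_rev u' u]
  linear_combination 2 * pairing + polar_u + α * polar_v

theorem implicit_update_distance_inequality_general {α η : ℝ} (hα : 0 ≤ α) {u u' v g : E}
    (h : u' = u + α • (v - u') - η • g) (w : E) :
    (1 + α) * ‖u' - w‖ ^ 2
      ≤ ‖u - w‖ ^ 2 - ‖u' - u‖ ^ 2 + α * ‖v - w‖ ^ 2 - 2 * η * ⟪g, u' - w⟫ := by
  rw [implicit_update_distance_identity h w]
  gcongr
  exact sub_le_self _ (sq_nonneg _)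

end ImplicitUpdate

theorem implicit_update_distance_inequality
    {E : Type*} [NormedAddCommGroup E] [InnerProductSpace ℝ E]
    (α η : ℝ) (hα : 0 < α) (hη : 0 < η)
    (u u' v ustar g : E)
    (h : u' = u + α • (v - u') - η • g) :
    (1 + α) * ‖u' - ustar‖ ^ 2
      ≤ ‖u - ustar‖ ^ 2 - ‖u' - u‖ ^ 2 + α * ‖v - ustar‖ ^ 2
        - 2 * η * ⟪g, u' - ustar⟫ :=
  implicit_update_distance_inequality_general hα.le h ustar
end

section
/- Let f : E_x × E_y → ℝ be (L_x, L_y)-smooth and (μ_x, μ_y)-strongly convex with 0 < μ_x ≤ L_x and 0 < μ_y ≤ L_y, and let (x*, y*) be a global minimizer of f. Set α = √(μ_x/L_x), η_x = 1/√(μ_x·L_x), η_y = (1/μ_y)·√(μ_x/L_x). Let the sequences (x^k, y^k, x̄^k, ȳ^k)_{k=0}^{K} satisfy the BAM recurrences: x^0 = x̄^0, y^0 = ȳ^0, and for every k < K, with x̲^k = α·x^k + (1−α)·x̄^k and y̲^k = α·y^k + (1−α)·ȳ^k: ‖∇_y f(x̲^k, ȳ^{k+1}) + (η_y·α)⁻¹·(ȳ^{k+1}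 − y̲^k)‖ ≤ (η_y·α)⁻¹·‖ȳ^{k+1} − y̲^k‖, x̄^{k+1} = x̲^k − η_x·α·∇_x f(x̲^k, ȳ^{k+1}), x^{k+1} = x^k + α·(x̲^k − x^{k+1}) − η_x·∇_x f(x̲^k, ȳ^{k+1}), y^{k+1} = y^k + α·(ȳ^{k+1} − y^{k+1}) − η_y·∇_y f(x̲^k, ȳ^{k+1}). Define Ψ^0 = (1+α)·(η_x⁻¹·‖x^0 − x*‖² + η_y⁻¹·‖y^0 − y*‖²) + (2/α)·(f(x̄^0, ȳ^0) − f(x*, y*)). Then for any ε > 0, if K ≥ 2·√(L_x/μ_x)·log(max{1, α·Ψ^0/(2ε)}), then f(x̄^K, ȳ^K) − f(x*, y*) ≤ ε. -/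
open RealInnerProductSpace

/-!
Write `z = (xu k, yb (k + 1))` for the point at which both blocks of the gradient are evaluated. The
extrapolated iterates `x`, `y` make the distance to the minimizer contract up to the squared
gradient norms and the pairing of the gradient at `z` with `(x k - xs, y k - ys)`. Since `xu`, `yu`
are convex combinations, that pairing splits into the linearizations of `f` at `z` towards the
minimizer (weight `α`) and towards `(xb k, yb k)` (weight `1 - α`), which convexity turns into
function values. The squared gradient norms are paid for in `x` by the descent of a gradient step
and in `y` by the inexactness criterion. The result is that the Lyapunov function `Ψ` decreases by
the factor `1 + α` per step, and `log (1 + α) ≥ α / 2` gives the iteration count.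
-/

namespace BAM

section InnerProductSpace

variable {E : Type*} [SeminormedAddCommGroup E] [InnerProductSpace ℝ E]

/-- The quadratic upper bound defining `L`-smoothness of `φ`, with `g` in the role of the
gradient. -/
def QuadraticUpperBound (φ : E → ℝ) (g : E → E) (L : ℝ) : Prop :=
  ∀ u v, φ v ≤ φ u + ⟪g u, v - u⟫ + L / 2 * ‖v - u‖ ^ 2

lemma QuadraticUpperBound.gradient_step_le {φ : E → ℝ} {g : E → E} {L t : ℝ}
    (hφ : QuadraticUpperBound φ g L) (ht : 0 ≤ t) (htL : t * L ≤ 1) (u : E) :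
    φ (u - t • g u) ≤ φ u - t / 2 * ‖g u‖ ^ 2 := by
  have hbound := hφ u (u - t • g u)
  have hinner : ⟪g u, u - t • g u - u⟫ = -(t * ‖g u‖ ^ 2) := by
    rw [sub_sub_cancel_left, inner_neg_right, real_inner_smul_right, real_inner_self_eq_norm_sq]
  have hnorm : ‖u - t • g u - u‖ ^ 2 = t ^ 2 * ‖g u‖ ^ 2 := by
    rw [sub_sub_cancel_left, norm_neg, norm_smul, mul_pow, Real.norm_eq_abs, sq_abs]
  rw [hinner, hnorm] at hbound
  have hstep : t * L * (t / 2 * ‖g u‖ ^ 2) ≤ 1 * (t / 2 * ‖g u‖ ^ 2) := by gcongr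
  linarith

lemma norm_sq_add_two_mul_inner_nonpos {g d : E} (h : ‖g + d‖ ≤ ‖d‖) :
    ‖g‖ ^ 2 + 2 * ⟪g, d⟫ ≤ 0 := by
  have hsq : ‖g + d‖ ^ 2 ≤ ‖d‖ ^ 2 := by gcongr
  rw [norm_add_sq_real] at hsq
  linarith

lemma mul_norm_sq_add_two_mul_inner_nonpos {g d : E} {c : ℝ} (hc : 0 < c)
    (h : ‖g + c⁻¹ • d‖ ≤ c⁻¹ * ‖d‖) : c * ‖g‖ ^ 2 + 2 * ⟪g, d⟫ ≤ 0 := by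
  have hnorm : ‖c⁻¹ • d‖ = c⁻¹ * ‖d‖ := norm_smul_of_nonneg (inv_pos.2 hc).le d
  have hsq := norm_sq_add_two_mul_inner_nonpos (h.trans_eq hnorm.symm)
  rw [real_inner_smul_right] at hsq
  calc c * ‖g‖ ^ 2 + 2 * ⟪g, d⟫ = c * (‖g‖ ^ 2 + 2 * (c⁻¹ * ⟪g, d⟫)) := by field_simp
    _ ≤ 0 := mul_nonpos_of_nonneg_of_nonpos hc.le hsq

lemma norm_one_add_smul_sub_smul_sq (u w : E) (α : ℝ) :
    ‖(1 + α) • u - α • w‖ ^ 2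
      = (1 + α) * ‖u‖ ^ 2 - α * ‖w‖ ^ 2 + α * (1 + α) * ‖u - w‖ ^ 2 := by
  simp only [norm_sub_sq_real, norm_smul, mul_pow, Real.norm_eq_abs, sq_abs,
    real_inner_smul_left, real_inner_smul_right]
  ring

lemma one_add_mul_norm_sub_sq_le {x x' z g : E} {α η : ℝ} (hα : 0 ≤ α)
    (hx' : x' = x + α • (z - x') - η • g) (s : E) :
    (1 + α) * ‖x' - s‖ ^ 2
      ≤ ‖x - s‖ ^ 2 + α * ‖z - s‖ ^ 2 + η ^ 2 * ‖g‖ ^ 2 - 2 * η * ⟪g, x - s⟫ := by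
  have hexplicit : (1 + α) • (x' - s) - α • (z - s) = (x - s) - η • g := by
    linear_combination (norm := module) hx'
  have hidentity := norm_one_add_smul_sub_smul_sq (x' - s) (z - s) α
  have hexpand : ‖(x - s) - η • g‖ ^ 2
      = ‖x - s‖ ^ 2 - 2 * η * ⟪g, x - s⟫ + η ^ 2 * ‖g‖ ^ 2 := by
    rw [norm_sub_sq_real, real_inner_smul_right, real_inner_comm, norm_smul, mul_pow,
      Real.norm_eq_abs, sq_abs]
    ring
  rw [hexplicit, hexpand] at hidentity
  have hnonneg : 0 ≤ α * (1 + α) * ‖(x' - s) - (z - s)‖ ^ 2 := by positivity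
  linarith

lemma one_add_mul_inv_mul_norm_sub_sq_le {x x' z g : E} {α η μ : ℝ} (hα : 0 ≤ α) (hη : 0 < η)
    (hμ : α ≤ η * μ) (hx' : x' = x + α • (z - x') - η • g) (s : E) :
    (1 + α) * (η⁻¹ * ‖x' - s‖ ^ 2)
      ≤ η⁻¹ * ‖x - s‖ ^ 2 + μ * ‖z - s‖ ^ 2 + η * ‖g‖ ^ 2 - 2 * ⟪g, x - s⟫ := by
  calc (1 + α) * (η⁻¹ * ‖x' - s‖ ^ 2) = η⁻¹ * ((1 + α) * ‖x' - s‖ ^ 2) := by ring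
    _ ≤ η⁻¹ * (‖x - s‖ ^ 2 + η * μ * ‖z - s‖ ^ 2 + η ^ 2 * ‖g‖ ^ 2 - 2 * η * ⟪g, x - s⟫) := by
      gcongr
      exact (one_add_mul_norm_sub_sq_le hα hx' s).trans (by gcongr)
    _ = η⁻¹ * ‖x - s‖ ^ 2 + μ * ‖z - s‖ ^ 2 + η * ‖g‖ ^ 2 - 2 * ⟪g, x - s⟫ := by field_simp

lemma mul_inner_sub_of_eq_smul_add_smul {x x' z : E} {α : ℝ} (hz : z = α • x + (1 - α) • x')
    (g s w : E) :
    α * ⟪g, x - s⟫ = α * ⟪g, w - s⟫ + (1 - α) * ⟪g, w - x'⟫ - ⟪g, w - z⟫ := by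
  simp only [hz, inner_add_right, inner_sub_right, real_inner_smul_right]
  ring

end InnerProductSpace

lemma half_le_log_one_add {α : ℝ} (hα₀ : 0 ≤ α) (hα₂ : α ≤ 2) : α / 2 ≤ Real.log (1 + α) := by
  refine le_trans ?_ (Real.le_log_one_add_of_nonneg hα₀)
  rw [div_le_div_iff₀ two_pos (by linarith)]
  nlinarith

lemma le_one_add_pow_of_log_le {α r : ℝ} {K : ℕ} (hα₀ : 0 < α) (hα₂ : α ≤ 2)
    (hK : 2 / α * Real.log (max 1 r) ≤ K) : r ≤ (1 + α) ^ K := by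
  have hlog : Real.log (max 1 r) ≤ Real.log ((1 + α) ^ K) := by
    calc Real.log (max 1 r) = α / 2 * (2 / α * Real.log (max 1 r)) := by field_simp
      _ ≤ α / 2 * K := by gcongr
      _ ≤ Real.log (1 + α) * K := by gcongr; exact half_le_log_one_add hα₀.le hα₂
      _ = Real.log ((1 + α) ^ K) := by rw [Real.log_pow, mul_comm]
  have hpos : 0 < max 1 r := one_pos.trans_le (le_max_left 1 r)
  exact (le_max_right 1 r).trans ((Real.log_le_log_iff hpos (by positivity)).1 hlog)

/-- The step-size conditions under which block accelerated minimization contracts: `Lx` is the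
smoothness constant in the first block and `μx`, `μy` are the convexity moduli. -/
structure Admissible (Lx μx μy α ηx ηy : ℝ) : Prop where
  pos : 0 < α
  le_one : α ≤ 1
  ηx_pos : 0 < ηx
  ηy_pos : 0 < ηy
  le_x : α ≤ ηx * μx
  le_y : α ≤ ηy * μy
  step_le : ηx * α * Lx ≤ 1

lemma Admissible.μx_pos {Lx μx μy α ηx ηy : ℝ} (hp : Admissible Lx μx μy α ηx ηy) : 0 < μx :=
  pos_of_mul_pos_right (hp.pos.trans_le hp.le_x) hp.ηx_pos.le

lemma Admissible.μy_pos {Lx μx μy α ηx ηy : ℝ} (hp : Admissible Lx μx μy α ηx ηy) : 0 < μy :=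
  pos_of_mul_pos_right (hp.pos.trans_le hp.le_y) hp.ηy_pos.le

lemma admissible_sqrt_div {Lx μx μy : ℝ} (hμx : 0 < μx) (hμy : 0 < μy) (hμL : μx ≤ Lx) :
    Admissible Lx μx μy √(μx / Lx) (1 / √(μx * Lx)) (1 / μy * √(μx / Lx)) := by
  have hLx : 0 < Lx := hμx.trans_le hμL
  have hαL : √(μx * Lx) = √(μx / Lx) * Lx := by
    rw [← Real.sqrt_sq hLx.le, ← Real.sqrt_mul (by positivity), Real.sqrt_sq hLx.le]
    congr 1
    field_simp
  have hαα : √(μx / Lx) * √(μx / Lx) * Lx = μx := by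
    rw [Real.mul_self_sqrt (by positivity), div_mul_cancel₀ _ hLx.ne']
  have hα : 0 < √(μx / Lx) := by positivity
  exact {
    pos := hα
    le_one := Real.sqrt_le_one.2 ((div_le_one hLx).2 hμL)
    ηx_pos := by positivity
    ηy_pos := by positivity
    le_x := by
      rw [hαL, one_div_mul_eq_div, le_div_iff₀ (by positivity), ← mul_assoc, hαα]
    le_y := by rw [mul_right_comm, one_div_mul_cancel hμy.ne', one_mul]
    step_le := by rw [mul_assoc, ← hαL, one_div_mul_cancel (by positivity)] }

section Potential

variable {Ex Ey : Type*} [SeminormedAddCommGroup Ex] [SeminormedAddCommGroup Ey]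

/-- The squared distance to `(xs, ys)`, weighted by the inverse step sizes. -/
noncomputable def weightedDistSq (ηx ηy : ℝ) (xs : Ex) (ys : Ey) (x : Ex) (y : Ey) : ℝ :=
  ηx⁻¹ * ‖x - xs‖ ^ 2 + ηy⁻¹ * ‖y - ys‖ ^ 2

/-- The Lyapunov function `Ψ` of the method, relative to a reference point `(xs, ys)`. -/
noncomputable def potential (f : Ex → Ey → ℝ) (α ηx ηy : ℝ) (xs : Ex) (ys : Ey)
    (x xb : Ex) (y yb : Ey) : ℝ :=
  (1 + α) * weightedDistSq ηx ηy xs ys x y + 2 / α * (f xb yb - f xs ys)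

variable {f : Ex → Ey → ℝ} {Lx μx μy α ηx ηy : ℝ} {xs : Ex} {ys : Ey}

lemma Admissible.weightedDistSq_nonneg (hp : Admissible Lx μx μy α ηx ηy) (u : Ex) (v : Ey) :
    0 ≤ weightedDistSq ηx ηy xs ys u v := by
  have hηx := hp.ηx_pos
  have hηy := hp.ηy_pos
  unfold weightedDistSq
  positivity

lemma Admissible.sub_le_mul_potential (hp : Admissible Lx μx μy α ηx ηy) (u ub : Ex) (v vb : Ey) :
    f ub vb - f xs ys ≤ α / 2 * potential f α ηx ηy xs ys u ub v vb := by
  have hα := hp.pos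
  have hdist : 0 ≤ (1 + α) * weightedDistSq ηx ηy xs ys u v :=
    mul_nonneg (by positivity) (hp.weightedDistSq_nonneg u v)
  calc f ub vb - f xs ys = α / 2 * (2 / α * (f ub vb - f xs ys)) := by field_simp
    _ ≤ α / 2 * potential f α ηx ηy xs ys u ub v vb := by
      gcongr
      exact le_add_of_nonneg_left hdist

end Potential

variable {Ex Ey : Type*} [SeminormedAddCommGroup Ex] [InnerProductSpace ℝ Ex]
  [SeminormedAddCommGroup Ey] [InnerProductSpace ℝ Ey]

/-- `(μx, μy)`-strong convexity of `f`, with an arbitrary selection `(gx, gy)` of subgradients in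
place of the gradient. -/
def StronglyConvex (f : Ex → Ey → ℝ) (gx : Ex → Ey → Ex) (gy : Ex → Ey → Ey) (μx μy : ℝ) : Prop :=
  ∀ x₁ x₂ : Ex, ∀ y₁ y₂ : Ey,
    f x₁ y₁ + ⟪gx x₁ y₁, x₂ - x₁⟫ + ⟪gy x₁ y₁, y₂ - y₁⟫
      + μx / 2 * ‖x₂ - x₁‖ ^ 2 + μy / 2 * ‖y₂ - y₁‖ ^ 2 ≤ f x₂ y₂

/-- The `k`-th iteration of block accelerated minimization. The sequences `xb`, `yb` are the
paper's `x̄`, `ȳ` and `xu`, `yu` its `x̲`, `y̲`; the `y`-block is updated by an inexact proximal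
step, the `x`-block by a gradient step, and the equations for `x (k + 1)` and `y (k + 1)` are
implicit. -/
structure IsStep (gx : Ex → Ey → Ex) (gy : Ex → Ey → Ey) (α ηx ηy : ℝ)
    (x xb xu : ℕ → Ex) (y yb yu : ℕ → Ey) (k : ℕ) : Prop where
  xu_eq : xu k = α • x k + (1 - α) • xb k
  yu_eq : yu k = α • y k + (1 - α) • yb k
  inexact : ‖gy (xu k) (yb (k + 1)) + (ηy * α)⁻¹ • (yb (k + 1) - yu k)‖
    ≤ (ηy * α)⁻¹ * ‖yb (k + 1) - yu k‖
  xb_succ : xb (k + 1) = xu k - (ηx * α) • gx (xu k) (yb (k + 1))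
  x_succ : x (k + 1) = x k + α • (xu k - x (k + 1)) - ηx • gx (xu k) (yb (k + 1))
  y_succ : y (k + 1) = y k + α • (yb (k + 1) - y (k + 1)) - ηy • gy (xu k) (yb (k + 1))

variable {f : Ex → Ey → ℝ} {gx : Ex → Ey → Ex} {gy : Ex → Ey → Ey} {Lx μx μy α ηx ηy : ℝ}
  {x xb xu : ℕ → Ex} {y yb yu : ℕ → Ey} {k K : ℕ} {xs : Ex} {ys : Ey}

lemma StronglyConvex.sub_add_le_inner (hsc : StronglyConvex f gx gy μx μy)
    (u v : Ex) (w z : Ey) :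
    f u w - f v z + (μx / 2 * ‖u - v‖ ^ 2 + μy / 2 * ‖w - z‖ ^ 2)
      ≤ ⟪gx u w, u - v⟫ + ⟪gy u w, w - z⟫ := by
  have h := hsc u v w z
  rw [← neg_sub u v, ← neg_sub w z, inner_neg_right, inner_neg_right, norm_neg, norm_neg] at h
  linarith

lemma StronglyConvex.sub_le_inner (hsc : StronglyConvex f gx gy μx μy) (hμx : 0 ≤ μx)
    (hμy : 0 ≤ μy) (u v : Ex) (w z : Ey) :
    f u w - f v z ≤ ⟪gx u w, u - v⟫ + ⟪gy u w, w - z⟫ := by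
  have hnonneg : 0 ≤ μx / 2 * ‖u - v‖ ^ 2 + μy / 2 * ‖w - z‖ ^ 2 := by positivity
  linarith [hsc.sub_add_le_inner u v w z]

namespace IsStep

variable (h : IsStep gx gy α ηx ηy x xb xu y yb yu k)

include h

lemma f_xb_succ_le (hp : Admissible Lx μx μy α ηx ηy)
    (hsmooth : ∀ v, QuadraticUpperBound (f · v) (gx · v) Lx) :
    f (xb (k + 1)) (yb (k + 1))
      ≤ f (xu k) (yb (k + 1)) - ηx * α / 2 * ‖gx (xu k) (yb (k + 1))‖ ^ 2 := by
  rw [h.xb_succ]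
  exact (hsmooth (yb (k + 1))).gradient_step_le (mul_nonneg hp.ηx_pos.le hp.pos.le) hp.step_le _

lemma le_mul_inner_add_inner (hp : Admissible Lx μx μy α ηx ηy)
    (hsc : StronglyConvex f gx gy μx μy) :
    α * (f (xu k) (yb (k + 1)) - f xs ys
          + (μx / 2 * ‖xu k - xs‖ ^ 2 + μy / 2 * ‖yb (k + 1) - ys‖ ^ 2))
        + (1 - α) * (f (xu k) (yb (k + 1)) - f (xb k) (yb k))
        + ηy * α / 2 * ‖gy (xu k) (yb (k + 1))‖ ^ 2
      ≤ α * (⟪gx (xu k) (yb (k + 1)), x k - xs⟫ + ⟪gy (xu k) (yb (k + 1)), y k - ys⟫) := by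
  have hmin := mul_le_mul_of_nonneg_left
    (hsc.sub_add_le_inner (xu k) xs (yb (k + 1)) ys) hp.pos.le
  have hprev := mul_le_mul_of_nonneg_left
    (hsc.sub_le_inner hp.μx_pos.le hp.μy_pos.le (xu k) (xb k) (yb (k + 1)) (yb k))
    (sub_nonneg.2 hp.le_one)
  have hinexact := mul_norm_sq_add_two_mul_inner_nonpos (mul_pos hp.ηy_pos hp.pos) h.inexact
  have hx := mul_inner_sub_of_eq_smul_add_smul h.xu_eq (gx (xu k) (yb (k + 1))) xs (xu k)
  have hy := mul_inner_sub_of_eq_smul_add_smul h.yu_eq (gy (xu k) (yb (k + 1))) ys (yb (k + 1))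
  rw [sub_self, inner_zero_right] at hx
  linarith

lemma one_add_mul_weightedDistSq_succ_le (hp : Admissible Lx μx μy α ηx ηy) :
    (1 + α) * weightedDistSq ηx ηy xs ys (x (k + 1)) (y (k + 1))
      ≤ weightedDistSq ηx ηy xs ys (x k) (y k)
        + (μx * ‖xu k - xs‖ ^ 2 + μy * ‖yb (k + 1) - ys‖ ^ 2)
        + (ηx * ‖gx (xu k) (yb (k + 1))‖ ^ 2 + ηy * ‖gy (xu k) (yb (k + 1))‖ ^ 2)
        - 2 * (⟪gx (xu k) (yb (k + 1)), x k - xs⟫ + ⟪gy (xu k) (yb (k + 1)), y k - ys⟫) := by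
  have hx := one_add_mul_inv_mul_norm_sub_sq_le hp.pos.le hp.ηx_pos hp.le_x h.x_succ xs
  have hy := one_add_mul_inv_mul_norm_sub_sq_le hp.pos.le hp.ηy_pos hp.le_y h.y_succ ys
  unfold weightedDistSq
  linarith

lemma potential_succ_le (hp : Admissible Lx μx μy α ηx ηy)
    (hsmooth : ∀ v, QuadraticUpperBound (f · v) (gx · v) Lx)
    (hsc : StronglyConvex f gx gy μx μy) :
    potential f α ηx ηy xs ys (x (k + 1)) (xb (k + 1)) (y (k + 1)) (yb (k + 1))
      ≤ weightedDistSq ηx ηy xs ys (x k) (y k)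
        + (1 - α) * (2 / α * (f (xb k) (yb k) - f xs ys)) := by
  have hα := hp.pos
  have hdist := mul_le_mul_of_nonneg_left
    (h.one_add_mul_weightedDistSq_succ_le hp (xs := xs) (ys := ys)) hα.le
  have hpair := h.le_mul_inner_add_inner hp hsc (xs := xs) (ys := ys)
  have hdescent := h.f_xb_succ_le hp hsmooth
  have hcancel (t : ℝ) : α * (2 / α * t) = 2 * t := by field_simp
  refine le_of_mul_le_mul_left ?_ hα
  rw [potential, mul_add, mul_add, hcancel, mul_left_comm α (1 - α), hcancel]
  linarith

lemma potential_succ_le_inv_mul (hp : Admissible Lx μx μy α ηx ηy)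
    (hsmooth : ∀ v, QuadraticUpperBound (f · v) (gx · v) Lx)
    (hsc : StronglyConvex f gx gy μx μy) (hmin : ∀ u v, f xs ys ≤ f u v) :
    potential f α ηx ηy xs ys (x (k + 1)) (xb (k + 1)) (y (k + 1)) (yb (k + 1))
      ≤ (1 + α)⁻¹ * potential f α ηx ηy xs ys (x k) (xb k) (y k) (yb k) := by
  have hα := hp.pos
  have hgap : 0 ≤ 2 / α * (f (xb k) (yb k) - f xs ys) :=
    mul_nonneg (by positivity) (sub_nonneg.2 (hmin _ _))
  have hrate : 1 - α ≤ (1 + α)⁻¹ := by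
    rw [← one_div, le_div_iff₀ (by positivity)]
    nlinarith
  calc _ ≤ weightedDistSq ηx ηy xs ys (x k) (y k)
          + (1 - α) * (2 / α * (f (xb k) (yb k) - f xs ys)) := h.potential_succ_le hp hsmooth hsc
    _ ≤ weightedDistSq ηx ηy xs ys (x k) (y k)
          + (1 + α)⁻¹ * (2 / α * (f (xb k) (yb k) - f xs ys)) := by gcongr
    _ = _ := by rw [potential, mul_add, inv_mul_cancel_left₀ (by positivity)]

end IsStep

lemma potential_le_inv_pow_mul (hp : Admissible Lx μx μy α ηx ηy)
    (hsmooth : ∀ v, QuadraticUpperBound (f · v) (gx · v) Lx)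
    (hsc : StronglyConvex f gx gy μx μy) (hmin : ∀ u v, f xs ys ≤ f u v)
    (hstep : ∀ k < K, IsStep gx gy α ηx ηy x xb xu y yb yu k) :
    potential f α ηx ηy xs ys (x K) (xb K) (y K) (yb K)
      ≤ (1 + α)⁻¹ ^ K * potential f α ηx ηy xs ys (x 0) (xb 0) (y 0) (yb 0) := by
  have hα := hp.pos
  exact le_geom (u := fun k ↦ potential f α ηx ηy xs ys (x k) (xb k) (y k) (yb k))
    (by positivity) K fun k hk ↦ (hstep k hk).potential_succ_le_inv_mul hp hsmooth hsc hmin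

end BAM

theorem bam_epsilon_complexity_general
    {Ex Ey : Type*} [SeminormedAddCommGroup Ex] [InnerProductSpace ℝ Ex]
    [SeminormedAddCommGroup Ey] [InnerProductSpace ℝ Ey]
    {f : Ex → Ey → ℝ} {gx : Ex → Ey → Ex} {gy : Ex → Ey → Ey} {Lx μx μy α ηx ηy : ℝ}
    (hp : BAM.Admissible Lx μx μy α ηx ηy)
    (hsmooth : ∀ v, BAM.QuadraticUpperBound (f · v) (gx · v) Lx)
    (hsc : BAM.StronglyConvex f gx gy μx μy)
    {xs : Ex} {ys : Ey} (hmin : ∀ u v, f xs ys ≤ f u v)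
    {K : ℕ} {x xb xu : ℕ → Ex} {y yb yu : ℕ → Ey}
    (hstep : ∀ k < K, BAM.IsStep gx gy α ηx ηy x xb xu y yb yu k)
    {ε : ℝ} (hε : 0 < ε)
    (hK : 2 / α * Real.log
      (max 1 (α * BAM.potential f α ηx ηy xs ys (x 0) (xb 0) (y 0) (yb 0) / (2 * ε))) ≤ K) :
    f (xb K) (yb K) - f xs ys ≤ ε := by
  have hα := hp.pos
  have hpow := BAM.le_one_add_pow_of_log_le hα (hp.le_one.trans one_le_two) hK
  rw [div_le_iff₀ (by positivity)] at hpow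
  set Ψ : ℕ → ℝ := fun k ↦ BAM.potential f α ηx ηy xs ys (x k) (xb k) (y k) (yb k)
  calc f (xb K) (yb K) - f xs ys
      ≤ α / 2 * Ψ K := hp.sub_le_mul_potential _ _ _ _
    _ ≤ α / 2 * ((1 + α)⁻¹ ^ K * Ψ 0) := by
      gcongr
      exact BAM.potential_le_inv_pow_mul hp hsmooth hsc hmin hstep
    _ = (1 + α)⁻¹ ^ K * (α * Ψ 0) / 2 := by ring
    _ ≤ (1 + α)⁻¹ ^ K * ((1 + α) ^ K * (2 * ε)) / 2 := by gcongr
    _ = ε := by rw [inv_pow]; field_simp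

theorem bam_epsilon_complexity
    {Ex Ey : Type*} [NormedAddCommGroup Ex] [InnerProductSpace ℝ Ex]
    [NormedAddCommGroup Ey] [InnerProductSpace ℝ Ey]
    (f : Ex → Ey → ℝ) (gx : Ex → Ey → Ex) (gy : Ex → Ey → Ey)
    (Lx Ly μx μy : ℝ) (hμx : 0 < μx) (hμy : 0 < μy) (hμLx : μx ≤ Lx) (hμLy : μy ≤ Ly)
    (hsmooth : ∀ x₁ x₂ : Ex, ∀ y₁ y₂ : Ey,
      f x₂ y₂ ≤ f x₁ y₁ + ⟪gx x₁ y₁, x₂ - x₁⟫ + ⟪gy x₁ y₁, y₂ - y₁⟫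
        + Lx / 2 * ‖x₂ - x₁‖ ^ 2 + Ly / 2 * ‖y₂ - y₁‖ ^ 2)
    (hsc : ∀ x₁ x₂ : Ex, ∀ y₁ y₂ : Ey,
      f x₂ y₂ ≥ f x₁ y₁ + ⟪gx x₁ y₁, x₂ - x₁⟫ + ⟪gy x₁ y₁, y₂ - y₁⟫
        + μx / 2 * ‖x₂ - x₁‖ ^ 2 + μy / 2 * ‖y₂ - y₁‖ ^ 2)
    (xs : Ex) (ys : Ey) (hmin : ∀ x y, f xs ys ≤ f x y)
    (α ηx ηy : ℝ)
    (hα : α = Real.sqrt (μx / Lx))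
    (hηx : ηx = 1 / Real.sqrt (μx * Lx))
    (hηy : ηy = (1 / μy) * Real.sqrt (μx / Lx))
    (K : ℕ)
    (x xb : ℕ → Ex) (y yb : ℕ → Ey)
    (xu : ℕ → Ex) (yu : ℕ → Ey)
    (hx0 : x 0 = xb 0) (hy0 : y 0 = yb 0)
    (hxu : ∀ k < K, xu k = α • x k + (1 - α) • xb k)
    (hyu : ∀ k < K, yu k = α • y k + (1 - α) • yb k)
    (hinner : ∀ k < K,
      ‖gy (xu k) (yb (k + 1)) + (ηy * α)⁻¹ • (yb (k + 1) - yu k)‖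
        ≤ (ηy * α)⁻¹ * ‖yb (k + 1) - yu k‖)
    (hxb : ∀ k < K, xb (k + 1) = xu k - (ηx * α) • gx (xu k) (yb (k + 1)))
    (hx : ∀ k < K, x (k + 1) = x k + α • (xu k - x (k + 1)) - ηx • gx (xu k) (yb (k + 1)))
    (hy : ∀ k < K, y (k + 1) = y k + α • (yb (k + 1) - y (k + 1)) - ηy • gy (xu k) (yb (k + 1)))
    (Ψ0 : ℝ)
    (hΨ0 : Ψ0 =
      (1 + α) * (ηx⁻¹ * ‖x 0 - xs‖ ^ 2 + ηy⁻¹ * ‖y 0 - ys‖ ^ 2)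
        + (2 / α) * (f (xb 0) (yb 0) - f xs ys))
    (ε : ℝ) (hε : 0 < ε)
    (hK : (K : ℝ) ≥ 2 * Real.sqrt (Lx / μx) * Real.log (max 1 (α * Ψ0 / (2 * ε)))) :
    f (xb K) (yb K) - f xs ys ≤ ε := by
  subst hα hηx hηy hΨ0
  refine bam_epsilon_complexity_general (BAM.admissible_sqrt_div hμx hμy hμLx)
    (fun v x₁ x₂ ↦ by simpa using hsmooth x₁ x₂ v v) hsc hmin
    (fun k hk ↦ ⟨hxu k hk, hyu k hk, hinner k hk, hxb k hk, hx k hk, hy k hk⟩) hε ?_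
  rwa [div_eq_mul_inv 2, ← Real.sqrt_inv, inv_div]
end

section
/- Let f : E_x × E_y → ℝ be (L_x, L_y)-smooth and (μ_x, μ_y)-strongly convex with 0 < μ_x ≤ L_x and 0 < μ_y ≤ L_y, and let (x*, y*) be a global minimizer of f. Set α = √(μ_x/L_x), η_x = 1/√(μ_x·L_x), η_y = (1/μ_y)·√(μ_x/L_x). Let the sequences (x^k, y^k, x̄^k, ȳ^k)_{k=0}^{K} satisfy the BAM recurrences: x^0 = x̄^0, y^0 = ȳ^0, and for every k < K, with x̲^k = α·x^k + (1−α)·x̄^k and y̲^k = α·y^k + (1−α)·ȳ^k: ‖∇_y f(x̲^k, ȳ^{k+1}) + (η_y·α)⁻¹·(ȳ^{k+1} − y̲^k)‖ ≤ (η_y·α)⁻¹·‖ȳ^{k+1} − y̲^k‖, x̄^{k+1} = x̲^k − η_x·α·∇_x f(x̲^k, ȳ^{k+1}), x^{k+1} = x^k + α·(x̲^k − x^{k+1}) − η_x·∇_x f(x̲^k, ȳ^{k+1}), y^{k+1} = y^k + α·(ȳ^{k+1} − y^{k+1}) − η_y·∇_y f(x̲^k, ȳ^{k+1}). Define Ψ^0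 = (1+α)·(η_x⁻¹·‖x^0 − x*‖² + η_y⁻¹·‖y^0 − y*‖²) + (2/α)·(f(x̄^0, ȳ^0) − f(x*, y*)). Then the iterates converge linearly to the minimizer: ‖x^K − x*‖² ≤ η_x·(1+α)^{−(K+1)}·Ψ^0 and ‖y^K − y*‖² ≤ η_y·(1+α)^{−(K+1)}·Ψ^0. -/
open RealInnerProductSpace

/-!
The Lyapunov function is `(1 + α) D + (2 / α) (f(x̄, ȳ) - f(x*, y*))`, where `D` is the squared
distance of `(x, y)` to the minimizer, the blocks being weighted by `ηx⁻¹` and `ηy⁻¹`. The implicit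
updates of `x` and `y` bound the next `D` by the current one, up to inner products and squared
norms of the partial gradients at `(x̲, ȳ⁺)`. The gradient step for `x̄` pays for `‖∇ₓf‖²`, the
inexactness criterion for `ȳ` pays for `‖∇_y f‖²`, and the inner products are absorbed by the
convexity lower bounds at `(x*, y*)` and at `(x̄, ȳ)`, taken with the weights `α` and `1 - α` that
define `(x̲, y̲)`. Hence each iteration divides the Lyapunov function by `1 + α`.
-/

section Norm

variable {E : Type*} [NormedAddCommGroup E]

lemma one_add_mul_norm_sq_le [NormedSpace ℝ E] {α : ℝ} (hα : 0 ≤ α) {z p w : E}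
    (h : (1 + α) • z = p + α • w) : (1 + α) * ‖z‖ ^ 2 ≤ ‖p‖ ^ 2 + α * ‖w‖ ^ 2 := by
  have hα' : 0 < 1 + α := by linarith
  have htriangle : (1 + α) * ‖z‖ ≤ ‖p‖ + α * ‖w‖ := by
    calc (1 + α) * ‖z‖ = ‖p + α • w‖ := by rw [← h, norm_smul_of_nonneg hα'.le]
      _ ≤ ‖p‖ + ‖α • w‖ := norm_add_le _ _
      _ = ‖p‖ + α * ‖w‖ := by rw [norm_smul_of_nonneg hα]
  refine le_of_mul_le_mul_left ?_ hα'
  calc (1 + α) * ((1 + α) * ‖z‖ ^ 2) = ((1 + α) * ‖z‖) ^ 2 := by ring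
    _ ≤ (‖p‖ + α * ‖w‖) ^ 2 := by gcongr
    _ = (1 + α) * (‖p‖ ^ 2 + α * ‖w‖ ^ 2) - α * (‖p‖ - ‖w‖) ^ 2 := by ring
    _ ≤ (1 + α) * (‖p‖ ^ 2 + α * ‖w‖ ^ 2) := sub_le_self _ (by positivity)

variable [InnerProductSpace ℝ E]

lemma norm_sub_smul_sq (a g : E) (η : ℝ) :
    ‖a - η • g‖ ^ 2 = ‖a‖ ^ 2 - 2 * η * ⟪g, a⟫ + η ^ 2 * ‖g‖ ^ 2 := by
  rw [norm_sub_sq_real, real_inner_smul_right, norm_smul, mul_pow, Real.norm_eq_abs, sq_abs,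
    real_inner_comm]
  ring

lemma one_add_mul_norm_sub_sq_le_of_implicit_step {α η : ℝ} (hα : 0 ≤ α) (hη : 0 < η)
    {z z' w g : E} (h : z' = z + α • (w - z') - η • g) (s : E) :
    (1 + α) * (η⁻¹ * ‖z' - s‖ ^ 2) ≤
      η⁻¹ * ‖z - s‖ ^ 2 + α * η⁻¹ * ‖w - s‖ ^ 2 - 2 * ⟪g, z - s⟫ + η * ‖g‖ ^ 2 := by
  have haverage : (1 + α) • (z' - s) = (z - s - η • g) + α • (w - s) := by
    linear_combination (norm := module) h
  have hnorm := one_add_mul_norm_sq_le hα haverage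
  rw [norm_sub_smul_sq] at hnorm
  calc (1 + α) * (η⁻¹ * ‖z' - s‖ ^ 2) = η⁻¹ * ((1 + α) * ‖z' - s‖ ^ 2) := by ring
    _ ≤ η⁻¹ * (‖z - s‖ ^ 2 - 2 * η * ⟪g, z - s⟫ + η ^ 2 * ‖g‖ ^ 2 + α * ‖w - s‖ ^ 2) := by gcongr
    _ = _ := by field_simp; ring

lemma mul_norm_sq_add_two_mul_inner_nonpos {c : ℝ} (hc : 0 < c) {a d : E}
    (h : ‖a + c⁻¹ • d‖ ≤ c⁻¹ * ‖d‖) : c * ‖a‖ ^ 2 + 2 * ⟪a, d⟫ ≤ 0 := by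
  rw [← norm_smul_of_nonneg (inv_nonneg.2 hc.le)] at h
  have hsq : ‖a + c⁻¹ • d‖ ^ 2 ≤ ‖c⁻¹ • d‖ ^ 2 := by gcongr
  rw [norm_add_sq_real, real_inner_smul_right] at hsq
  calc c * ‖a‖ ^ 2 + 2 * ⟪a, d⟫ = c * (‖a‖ ^ 2 + 2 * (c⁻¹ * ⟪a, d⟫)) := by field_simp
    _ ≤ 0 := mul_nonpos_of_nonneg_of_nonpos hc.le (by linarith)

/-- `L`-smoothness of `φ` with gradient field `g`, expressed by the quadratic upper bound at every
point; differentiability is not part of the notion. -/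
def IsSmoothWith (L : ℝ) (φ : E → ℝ) (g : E → E) : Prop :=
  ∀ u v, φ v ≤ φ u + ⟪g u, v - u⟫ + L / 2 * ‖v - u‖ ^ 2

lemma IsSmoothWith.gradient_step_le {L γ : ℝ} {φ : E → ℝ} {g : E → E} (hφ : IsSmoothWith L φ g)
    (hγ : 0 ≤ γ) (hLγ : L * γ ≤ 1) (u : E) : φ (u - γ • g u) ≤ φ u - γ / 2 * ‖g u‖ ^ 2 := by
  have hupper := hφ u (u - γ • g u)
  rw [sub_sub_cancel_left, inner_neg_right, real_inner_smul_right, real_inner_self_eq_norm_sq,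
    norm_neg, norm_smul_of_nonneg hγ] at hupper
  calc φ (u - γ • g u) ≤ φ u - γ * ‖g u‖ ^ 2 + L * γ * (γ / 2 * ‖g u‖ ^ 2) := by linarith
    _ ≤ φ u - γ * ‖g u‖ ^ 2 + 1 * (γ / 2 * ‖g u‖ ^ 2) := by gcongr
    _ = φ u - γ / 2 * ‖g u‖ ^ 2 := by ring

end Norm

section BAM

variable {Ex Ey : Type*} [NormedAddCommGroup Ex] [NormedAddCommGroup Ey]
  {f : Ex → Ey → ℝ} {Lx μx μy α ηx ηy : ℝ}

/-- The conditions on the extrapolation weight `α` and the step sizes `ηx`, `ηy` under which BAM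
contracts, for a function that is `(μx, μy)`-strongly convex and `Lx`-smooth in `x`. -/
structure IsBAMParameter (Lx μx μy α ηx ηy : ℝ) : Prop where
  α_pos : 0 < α
  α_le_one : α ≤ 1
  ηx_pos : 0 < ηx
  ηy_pos : 0 < ηy
  le_μx_mul : α ≤ μx * ηx
  le_μy_mul : α ≤ μy * ηy
  Lx_mul_le_one : Lx * (ηx * α) ≤ 1

namespace IsBAMParameter

lemma of_sqrt (hμx : 0 < μx) (hμy : 0 < μy) (hμLx : μx ≤ Lx) :
    IsBAMParameter Lx μx μy √(μx / Lx) (1 / √(μx * Lx)) (1 / μy * √(μx / Lx)) := by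
  have hLx : 0 < Lx := hμx.trans_le hμLx
  refine ⟨by positivity, Real.sqrt_le_one.2 ((div_le_one hLx).2 hμLx), by positivity,
    by positivity, le_of_eq ?_, le_of_eq ?_, le_of_eq ?_⟩
  · rw [Real.sqrt_div hμx.le, Real.sqrt_mul hμx.le]
    field_simp
    exact Real.sq_sqrt hμx.le
  · field_simp
  · rw [Real.sqrt_div hμx.le, Real.sqrt_mul hμx.le]
    field_simp
    exact (Real.sq_sqrt hLx.le).symm

lemma μx_pos (h : IsBAMParameter Lx μx μy α ηx ηy) : 0 < μx :=
  pos_of_mul_pos_left (h.α_pos.trans_le h.le_μx_mul) h.ηx_pos.le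

lemma μy_pos (h : IsBAMParameter Lx μx μy α ηx ηy) : 0 < μy :=
  pos_of_mul_pos_left (h.α_pos.trans_le h.le_μy_mul) h.ηy_pos.le

lemma mul_inv_ηx_le (h : IsBAMParameter Lx μx μy α ηx ηy) : α * ηx⁻¹ ≤ μx :=
  mul_inv_le_of_le_mul₀ h.ηx_pos.le h.μx_pos.le h.le_μx_mul

lemma mul_inv_ηy_le (h : IsBAMParameter Lx μx μy α ηx ηy) : α * ηy⁻¹ ≤ μy :=
  mul_inv_le_of_le_mul₀ h.ηy_pos.le h.μy_pos.le h.le_μy_mul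

end IsBAMParameter

/-- The state `(x, y, x̄, ȳ)` of the BAM recurrences. -/
structure BAMState (Ex Ey : Type*) where
  x : Ex
  y : Ey
  xBar : Ex
  yBar : Ey

namespace BAMState

/-- The squared distance from `(x, y)` to `(xs, ys)`, the blocks being weighted by the inverse step
sizes. -/
noncomputable def distSq (ηx ηy : ℝ) (xs : Ex) (ys : Ey) (s : BAMState Ex Ey) : ℝ :=
  ηx⁻¹ * ‖s.x - xs‖ ^ 2 + ηy⁻¹ * ‖s.y - ys‖ ^ 2

/-- The Lyapunov function `Ψ` of BAM relative to the point `(xs, ys)`. -/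
noncomputable def lyapunov (f : Ex → Ey → ℝ) (α ηx ηy : ℝ) (xs : Ex) (ys : Ey)
    (s : BAMState Ex Ey) : ℝ :=
  (1 + α) * s.distSq ηx ηy xs ys + 2 / α * (f s.xBar s.yBar - f xs ys)

lemma norm_x_sub_sq_le (hηx : 0 < ηx) (hηy : 0 ≤ ηy) (xs : Ex) (ys : Ey) (s : BAMState Ex Ey) :
    ‖s.x - xs‖ ^ 2 ≤ ηx * s.distSq ηx ηy xs ys :=
  (inv_mul_le_iff₀ hηx).1 (le_add_of_nonneg_right (by positivity))

lemma norm_y_sub_sq_le (hηx : 0 ≤ ηx) (hηy : 0 < ηy) (xs : Ex) (ys : Ey) (s : BAMState Ex Ey) :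
    ‖s.y - ys‖ ^ 2 ≤ ηy * s.distSq ηx ηy xs ys :=
  (inv_mul_le_iff₀ hηy).1 (le_add_of_nonneg_left (by positivity))

lemma one_add_mul_distSq_le_lyapunov (hα : 0 ≤ α) {xs : Ex} {ys : Ey} (s : BAMState Ex Ey)
    (hs : f xs ys ≤ f s.xBar s.yBar) :
    (1 + α) * s.distSq ηx ηy xs ys ≤ s.lyapunov f α ηx ηy xs ys :=
  le_add_of_nonneg_right (mul_nonneg (by positivity) (sub_nonneg.2 hs))

end BAMState

variable [InnerProductSpace ℝ Ex] [InnerProductSpace ℝ Ey] {gx : Ex → Ey → Ex} {gy : Ex → Ey → Ey}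

/-- Joint `(μx, μy)`-strong convexity of `f` with partial gradient fields `gx` and `gy`, expressed
by the quadratic lower bound at every point; `gx` and `gy` may be mere subgradient selections. -/
def IsBlockStronglyConvexWith (μx μy : ℝ) (f : Ex → Ey → ℝ) (gx : Ex → Ey → Ex)
    (gy : Ex → Ey → Ey) : Prop :=
  ∀ x₁ x₂ y₁ y₂, f x₁ y₁ + ⟪gx x₁ y₁, x₂ - x₁⟫ + ⟪gy x₁ y₁, y₂ - y₁⟫
    + μx / 2 * ‖x₂ - x₁‖ ^ 2 + μy / 2 * ‖y₂ - y₁‖ ^ 2 ≤ f x₂ y₂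

lemma IsBlockStronglyConvexWith.le_convex_combination
    (hf : IsBlockStronglyConvexWith μx μy f gx gy) (hμx : 0 ≤ μx) (hμy : 0 ≤ μy)
    (hα₀ : 0 ≤ α) (hα₁ : α ≤ 1) (u x₁ x₂ : Ex) (v y₁ y₂ : Ey) :
    f u v + ⟪gx u v, α • x₁ + (1 - α) • x₂ - u⟫ + ⟪gy u v, α • y₁ + (1 - α) • y₂ - v⟫
        + α * (μx / 2 * ‖x₁ - u‖ ^ 2 + μy / 2 * ‖y₁ - v‖ ^ 2)
      ≤ α * f x₁ y₁ + (1 - α) * f x₂ y₂ := by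
  have hconvex : f u v + ⟪gx u v, x₂ - u⟫ + ⟪gy u v, y₂ - v⟫ ≤ f x₂ y₂ := by
    have hx : 0 ≤ μx / 2 * ‖x₂ - u‖ ^ 2 := by positivity
    have hy : 0 ≤ μy / 2 * ‖y₂ - v‖ ^ 2 := by positivity
    linarith [hf u x₂ v y₂]
  have hweighted := add_le_add (mul_le_mul_of_nonneg_left (hf u x₁ v y₁) hα₀)
    (mul_le_mul_of_nonneg_left hconvex (sub_nonneg.2 hα₁))
  simp only [inner_sub_right, inner_add_right, real_inner_smul_right] at hweighted ⊢
  linarith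

lemma IsBlockStronglyConvexWith.le_of_extrapolation
    (hf : IsBlockStronglyConvexWith μx μy f gx gy) (hμx : 0 ≤ μx) (hμy : 0 ≤ μy)
    (hα₀ : 0 ≤ α) (hα₁ : α ≤ 1) {s : BAMState Ex Ey} {u xs : Ex} {w v ys : Ey}
    (hu : u = α • s.x + (1 - α) • s.xBar) (hw : w = α • s.y + (1 - α) • s.yBar) :
    f u v - α * ⟪gx u v, s.x - xs⟫ - α * ⟪gy u v, s.y - ys⟫ - ⟪gy u v, v - w⟫
        + α * (μx / 2 * ‖u - xs‖ ^ 2 + μy / 2 * ‖v - ys‖ ^ 2)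
      ≤ α * f xs ys + (1 - α) * f s.xBar s.yBar := by
  have hxdiff : α • xs + (1 - α) • s.xBar - u = -(α • (s.x - xs)) := by
    rw [hu]; module
  have hydiff : α • ys + (1 - α) • s.yBar - v = -(α • (s.y - ys)) - (v - w) := by
    rw [hw]; module
  have hcomb := hf.le_convex_combination hμx hμy hα₀ hα₁ u xs s.xBar v ys s.yBar
  rw [hxdiff, hydiff, inner_sub_right, inner_neg_right, inner_neg_right,
    real_inner_smul_right, real_inner_smul_right, norm_sub_rev xs, norm_sub_rev ys] at hcomb
  linarith

/-- One BAM iteration from the state `s` to the state `t` through the extrapolated point `(u, w)`,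
which is `(x̲, y̲)` in the paper. The point `t.yBar` is any inexact proximal point of `f u` at `w`
satisfying the relative error criterion. -/
structure IsBAMStep (gx : Ex → Ey → Ex) (gy : Ex → Ey → Ey) (α ηx ηy : ℝ)
    (s : BAMState Ex Ey) (u : Ex) (w : Ey) (t : BAMState Ex Ey) : Prop where
  u_eq : u = α • s.x + (1 - α) • s.xBar
  w_eq : w = α • s.y + (1 - α) • s.yBar
  norm_residual_le : ‖gy u t.yBar + (ηy * α)⁻¹ • (t.yBar - w)‖ ≤ (ηy * α)⁻¹ * ‖t.yBar - w‖
  xBar_eq : t.xBar = u - (ηx * α) • gx u t.yBar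
  x_eq : t.x = s.x + α • (u - t.x) - ηx • gx u t.yBar
  y_eq : t.y = s.y + α • (t.yBar - t.y) - ηy • gy u t.yBar

namespace IsBAMStep

variable {s t : BAMState Ex Ey} {u : Ex} {w : Ey}

lemma mul_one_add_mul_distSq_add_le (hst : IsBAMStep gx gy α ηx ηy s u w t)
    (hp : IsBAMParameter Lx μx μy α ηx ηy) (hsmooth : ∀ y, IsSmoothWith Lx (f · y) (gx · y))
    (hsc : IsBlockStronglyConvexWith μx μy f gx gy) (xs : Ex) (ys : Ey) :
    α * ((1 + α) * t.distSq ηx ηy xs ys) + 2 * (f t.xBar t.yBar - f xs ys) ≤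
      α * s.distSq ηx ηy xs ys + 2 * (1 - α) * (f s.xBar s.yBar - f xs ys) := by
  have hα := hp.α_pos
  have hηx := hp.ηx_pos
  have hηy := hp.ηy_pos
  set v := t.yBar
  set g := gx u v
  set h := gy u v
  have hdescent : f t.xBar v ≤ f u v - ηx * α / 2 * ‖g‖ ^ 2 :=
    hst.xBar_eq ▸ (hsmooth v).gradient_step_le (by positivity) hp.Lx_mul_le_one u
  have hinexact : ηy * α * ‖h‖ ^ 2 + 2 * ⟪h, v - w⟫ ≤ 0 :=
    mul_norm_sq_add_two_mul_inner_nonpos (by positivity) hst.norm_residual_le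
  have hlower : f u v - α * ⟪g, s.x - xs⟫ - α * ⟪h, s.y - ys⟫ - ⟪h, v - w⟫
        + α * (μx / 2 * ‖u - xs‖ ^ 2 + μy / 2 * ‖v - ys‖ ^ 2)
      ≤ α * f xs ys + (1 - α) * f s.xBar s.yBar :=
    hsc.le_of_extrapolation hp.μx_pos.le hp.μy_pos.le hα.le hp.α_le_one hst.u_eq hst.w_eq
  have hxstep : (1 + α) * (ηx⁻¹ * ‖t.x - xs‖ ^ 2) ≤
      ηx⁻¹ * ‖s.x - xs‖ ^ 2 + μx * ‖u - xs‖ ^ 2 - 2 * ⟪g, s.x - xs⟫ + ηx * ‖g‖ ^ 2 := by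
    grw [one_add_mul_norm_sub_sq_le_of_implicit_step hα.le hηx hst.x_eq xs, hp.mul_inv_ηx_le]
  have hystep : (1 + α) * (ηy⁻¹ * ‖t.y - ys‖ ^ 2) ≤
      ηy⁻¹ * ‖s.y - ys‖ ^ 2 + μy * ‖v - ys‖ ^ 2 - 2 * ⟪h, s.y - ys⟫ + ηy * ‖h‖ ^ 2 := by
    grw [one_add_mul_norm_sub_sq_le_of_implicit_step hα.le hηy hst.y_eq ys, hp.mul_inv_ηy_le]
  have hsteps := mul_le_mul_of_nonneg_left (add_le_add hxstep hystep) hα.le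
  simp only [BAMState.distSq]
  linarith

lemma one_add_mul_lyapunov_le (hst : IsBAMStep gx gy α ηx ηy s u w t)
    (hp : IsBAMParameter Lx μx μy α ηx ηy) (hsmooth : ∀ y, IsSmoothWith Lx (f · y) (gx · y))
    (hsc : IsBlockStronglyConvexWith μx μy f gx gy) {xs : Ex} {ys : Ey}
    (hs : f xs ys ≤ f s.xBar s.yBar) :
    (1 + α) * t.lyapunov f α ηx ηy xs ys ≤ s.lyapunov f α ηx ηy xs ys := by
  have hα := hp.α_pos
  have hstep := hst.mul_one_add_mul_distSq_add_le hp hsmooth hsc xs ys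
  have hgap := sub_nonneg.2 hs
  simp only [BAMState.lyapunov]
  set D := s.distSq ηx ηy xs ys
  set D' := t.distSq ηx ηy xs ys
  set δ := f s.xBar s.yBar - f xs ys
  set δ' := f t.xBar t.yBar - f xs ys
  calc (1 + α) * ((1 + α) * D' + 2 / α * δ')
      = (1 + α) / α * (α * ((1 + α) * D') + 2 * δ') := by field_simp
    _ ≤ (1 + α) / α * (α * D + 2 * (1 - α) * δ) := by gcongr
    _ = (1 + α) * D + 2 / α * δ - 2 * α * δ := by field_simp; ring
    _ ≤ (1 + α) * D + 2 / α * δ := sub_le_self _ (by positivity)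

end IsBAMStep

theorem bam_iterate_linear_convergence_general (hp : IsBAMParameter Lx μx μy α ηx ηy)
    (hsmooth : ∀ y, IsSmoothWith Lx (f · y) (gx · y))
    (hsc : IsBlockStronglyConvexWith μx μy f gx gy) {xs : Ex} {ys : Ey}
    (hmin : ∀ x y, f xs ys ≤ f x y) {K : ℕ} {s : ℕ → BAMState Ex Ey}
    {xu : ℕ → Ex} {yu : ℕ → Ey}
    (hs : ∀ k < K, IsBAMStep gx gy α ηx ηy (s k) (xu k) (yu k) (s (k + 1))) :
    ‖(s K).x - xs‖ ^ 2 ≤ ηx * ((1 + α) ^ (K + 1))⁻¹ * (s 0).lyapunov f α ηx ηy xs ys ∧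
      ‖(s K).y - ys‖ ^ 2 ≤ ηy * ((1 + α) ^ (K + 1))⁻¹ * (s 0).lyapunov f α ηx ηy xs ys := by
  have hα : 0 < 1 + α := by linarith [hp.α_pos]
  have hgeom : (1 + α) ^ K * (s K).lyapunov f α ηx ηy xs ys ≤ (s 0).lyapunov f α ηx ηy xs ys := by
    rw [← le_inv_mul_iff₀ (pow_pos hα K), ← inv_pow]
    exact le_geom (u := fun k ↦ (s k).lyapunov f α ηx ηy xs ys) (inv_nonneg.2 hα.le) K fun k hk ↦
      (le_inv_mul_iff₀ hα).2 ((hs k hk).one_add_mul_lyapunov_le hp hsmooth hsc (hmin _ _))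
  have hdist : (s K).distSq ηx ηy xs ys ≤
      ((1 + α) ^ (K + 1))⁻¹ * (s 0).lyapunov f α ηx ηy xs ys := by
    rw [le_inv_mul_iff₀ (pow_pos hα _), pow_succ, mul_assoc]
    grw [(s K).one_add_mul_distSq_le_lyapunov hp.α_pos.le (hmin _ _), hgeom]
  simp only [mul_assoc]
  exact ⟨((s K).norm_x_sub_sq_le hp.ηx_pos hp.ηy_pos.le xs ys).trans
      (mul_le_mul_of_nonneg_left hdist hp.ηx_pos.le),
    ((s K).norm_y_sub_sq_le hp.ηx_pos.le hp.ηy_pos xs ys).trans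
      (mul_le_mul_of_nonneg_left hdist hp.ηy_pos.le)⟩

end BAM

theorem bam_iterate_linear_convergence
    {Ex Ey : Type*} [NormedAddCommGroup Ex] [InnerProductSpace ℝ Ex]
    [NormedAddCommGroup Ey] [InnerProductSpace ℝ Ey]
    (f : Ex → Ey → ℝ) (gx : Ex → Ey → Ex) (gy : Ex → Ey → Ey)
    (Lx Ly μx μy : ℝ) (hμx : 0 < μx) (hμy : 0 < μy) (hμLx : μx ≤ Lx) (hμLy : μy ≤ Ly)
    (hsmooth : ∀ x₁ x₂ : Ex, ∀ y₁ y₂ : Ey,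
      f x₂ y₂ ≤ f x₁ y₁ + ⟪gx x₁ y₁, x₂ - x₁⟫ + ⟪gy x₁ y₁, y₂ - y₁⟫
        + Lx / 2 * ‖x₂ - x₁‖ ^ 2 + Ly / 2 * ‖y₂ - y₁‖ ^ 2)
    (hsc : ∀ x₁ x₂ : Ex, ∀ y₁ y₂ : Ey,
      f x₂ y₂ ≥ f x₁ y₁ + ⟪gx x₁ y₁, x₂ - x₁⟫ + ⟪gy x₁ y₁, y₂ - y₁⟫
        + μx / 2 * ‖x₂ - x₁‖ ^ 2 + μy / 2 * ‖y₂ - y₁‖ ^ 2)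
    (xs : Ex) (ys : Ey) (hmin : ∀ x y, f xs ys ≤ f x y)
    (α ηx ηy : ℝ)
    (hα : α = Real.sqrt (μx / Lx))
    (hηx : ηx = 1 / Real.sqrt (μx * Lx))
    (hηy : ηy = (1 / μy) * Real.sqrt (μx / Lx))
    (K : ℕ)
    (x xb : ℕ → Ex) (y yb : ℕ → Ey)
    (xu : ℕ → Ex) (yu : ℕ → Ey)
    (hx0 : x 0 = xb 0) (hy0 : y 0 = yb 0)
    (hxu : ∀ k < K, xu k = α • x k + (1 - α) • xb k)
    (hyu : ∀ k < K, yu k = α • y k + (1 - α) • yb k)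
    (hinner : ∀ k < K,
      ‖gy (xu k) (yb (k + 1)) + (ηy * α)⁻¹ • (yb (k + 1) - yu k)‖
        ≤ (ηy * α)⁻¹ * ‖yb (k + 1) - yu k‖)
    (hxb : ∀ k < K, xb (k + 1) = xu k - (ηx * α) • gx (xu k) (yb (k + 1)))
    (hx : ∀ k < K, x (k + 1) = x k + α • (xu k - x (k + 1)) - ηx • gx (xu k) (yb (k + 1)))
    (hy : ∀ k < K, y (k + 1) = y k + α • (yb (k + 1) - y (k + 1)) - ηy • gy (xu k) (yb (k + 1)))
    (Ψ0 : ℝ)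
    (hΨ0 : Ψ0 =
      (1 + α) * (ηx⁻¹ * ‖x 0 - xs‖ ^ 2 + ηy⁻¹ * ‖y 0 - ys‖ ^ 2)
        + (2 / α) * (f (xb 0) (yb 0) - f xs ys))
    :
    ‖x K - xs‖ ^ 2 ≤ ηx * ((1 + α) ^ (K + 1))⁻¹ * Ψ0 ∧
      ‖y K - ys‖ ^ 2 ≤ ηy * ((1 + α) ^ (K + 1))⁻¹ * Ψ0 := by
  subst hα hηx hηy hΨ0
  exact bam_iterate_linear_convergence_general (s := fun k ↦ ⟨x k, y k, xb k, yb k⟩)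
    (.of_sqrt hμx hμy hμLx) (fun y₀ x₁ x₂ ↦ by simpa using hsmooth x₁ x₂ y₀ y₀) hsc hmin
    fun k hk ↦ ⟨hxu k hk, hyu k hk, hinner k hk, hxb k hk, hx k hk, hy k hk⟩
end
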